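/- arXiv:2603.18563 — 10 statements merged into one kernel-verified Lean document; each statement's English description precedes it below -/
import Mathlib

section
/- Let S be a nonempty finite set, p a probability vector on S, Σ a nonempty type, and V : Σ → S → ℝ a function with 0 ≤ V σ g ≤ 1 for all σ ∈ Σ and g ∈ S. Suppose that for each g ∈ S there exists σ_g ∈ Σ attaining the supremum, i.e. V (σ_g) g = ⨆_{σ ∈ Σ} V σ g. Then ∑_{g' ∈ S} p g' · ( ∑_{g ∈ S} p g · V (σ_{g'}) g ) ≥ ( ⨆_{σ ∈ Σ} ∑_{g ∈ S} p g · V σ g ) − ( 1 − ∑_{g ∈ S} (p g)² ). (This is the abstract content of 'posterior-sampling best response is a D-best response': S is a finite menu of opponent hypotheses, p the posterior over the menu, Σ the set of continuation strategies, V σ g the continuation value of σ against hypothesis g, all values normalized to [0,1], and D = 1 − ∑_g (p g)² is the posterior collision complement.) -/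
/-- **PS-BR is a D-best response** (abstract form).
`S` is a finite menu of opponent hypotheses, `p` the posterior over the menu,
`T` the set of continuation strategies, `V σ g` the continuation value of `σ`
against hypothesis `g`, normalized to `[0,1]`. If `sel g` attains the supremum
value against `g`, then posterior-sampling best response is within
`D = 1 - ∑ g, (p g)^2` of the best value against the posterior mixture. -/
theorem psbr_is_D_best_response {S T : Type*} [Fintype S] [Nonempty S] [Nonempty T]
    (p : S → ℝ) (hp0 : ∀ g, 0 ≤ p g) (hp1 : ∑ g, p g = 1)
    (V : T → S → ℝ) (hV0 : ∀ σ g, 0 ≤ V σ g) (hV1 : ∀ σ g, V σ g ≤ 1)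
    (sel : S → T) (hsel : ∀ g, V (sel g) g = ⨆ σ, V σ g) :
    ∑ g', p g' * ∑ g, p g * V (sel g') g ≥
      (⨆ σ, ∑ g, p g * V σ g) - (1 - ∑ g, (p g) ^ 2) := by
  have hm : ∀ σ g, V σ g ≤ V (sel g) g := by
    intro σ g
    rw [hsel g]
    exact le_ciSup (f := fun σ => V σ g) ⟨1, by rintro _ ⟨τ, rfl⟩; exact hV1 τ g⟩ σ
  have hple : ∀ g, p g ≤ 1 := by
    intro g
    rw [← hp1]
    exact Finset.single_le_sum (fun i _ => hp0 i) (Finset.mem_univ g)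
  rw [ge_iff_le, sub_le_iff_le_add]
  apply ciSup_le
  intro σ
  rw [← hp1, ← Finset.sum_sub_distrib, ← Finset.sum_add_distrib]
  apply Finset.sum_le_sum
  intro g _
  have h1 : p g * V (sel g) g ≤ ∑ h, p h * V (sel g) h :=
    Finset.single_le_sum (f := fun h => p h * V (sel g) h)
      (fun i _ => mul_nonneg (hp0 i) (hV0 _ i)) (Finset.mem_univ g)
  have h2 := mul_le_mul_of_nonneg_left h1 (hp0 g)
  have h3 := mul_le_mul_of_nonneg_left (hm σ g) (hp0 g)
  have h4 := mul_nonneg (hp0 g)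
    (mul_nonneg (sub_nonneg.2 (hV1 (sel g) g)) (sub_nonneg.2 (hple g)))
  nlinarith
end

section
/- Let S and M be nonempty finite sets, q a probability vector on S, π a probability vector on M, Σ a nonempty type, and V : Σ → (S × M) → ℝ a function with 0 ≤ V τ (g,m) ≤ 1 for all τ, g, m. Suppose that for each (g,m) ∈ S × M there exists τ_{(g,m)} ∈ Σ with V (τ_{(g,m)}) (g,m) = ⨆_{τ ∈ Σ} V τ (g,m). Then ∑_{(g',m') ∈ S × M} q g' · π m' · ( ∑_{(g,m) ∈ S × M} q g · π m · V (τ_{(g',m')}) (g,m) ) ≥ ( ⨆_{τ ∈ Σ} ∑_{(g,m) ∈ S × M} q g · π m · V τ (g,m) ) − ( 1 − ∑_{(g,m) ∈ S × M} (q g · π m)² ). (This is the abstract content of 'PS-BR with joint sampling of an opponent model and a payoff hypothesis is a D^{joint}-best response', where the joint posterior is the product p(g,m) = q g · π m and D^{joint} = 1 − ∑_{(g,m)} p(g,m)².) -/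
/-- **PS-BR with joint sampling of an opponent model and a payoff hypothesis is a
`D^joint`-best response** (abstract form). The joint posterior is the product
`p (g,m) = q g * π m` and `D^joint = 1 - ∑ (g,m), (q g * π m)^2`. -/
theorem psbr_joint_is_Djoint_best_response {S M T : Type*}
    [Fintype S] [Nonempty S] [Fintype M] [Nonempty M] [Nonempty T]
    (q : S → ℝ) (hq0 : ∀ g, 0 ≤ q g) (hq1 : ∑ g, q g = 1)
    (π : M → ℝ) (hπ0 : ∀ m, 0 ≤ π m) (hπ1 : ∑ m, π m = 1)
    (V : T → S × M → ℝ) (hV0 : ∀ τ gm, 0 ≤ V τ gm) (hV1 : ∀ τ gm, V τ gm ≤ 1)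
    (sel : S × M → T) (hsel : ∀ gm, V (sel gm) gm = ⨆ τ, V τ gm) :
    ∑ gm' : S × M, q gm'.1 * π gm'.2 * ∑ gm : S × M, q gm.1 * π gm.2 * V (sel gm') gm ≥
      (⨆ τ, ∑ gm : S × M, q gm.1 * π gm.2 * V τ gm) -
        (1 - ∑ gm : S × M, (q gm.1 * π gm.2) ^ 2) := by
  obtain ⟨p, hp⟩ : ∃ p : S × M → ℝ, ∀ a, p a = q a.1 * π a.2 := ⟨_, fun _ => rfl⟩
  simp only [← hp]
  have hp0 : ∀ a, 0 ≤ p a := fun a => by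
    rw [hp]; exact mul_nonneg (hq0 _) (hπ0 _)
  have hp1 : ∑ a, p a = 1 := by
    simp only [hp]
    rw [Fintype.sum_prod_type]
    simp only [← Finset.mul_sum, hπ1, mul_one, hq1]
  have hple : ∀ a, p a ≤ 1 := fun a => by
    rw [← hp1]
    exact Finset.single_le_sum (fun b _ => hp0 b) (Finset.mem_univ a)
  rw [ge_iff_le, sub_le_iff_le_add]
  refine ciSup_le fun τ => ?_
  rw [← sub_le_iff_le_add, ← hp1, ← Finset.sum_sub_distrib, ← Finset.sum_sub_distrib]
  refine Finset.sum_le_sum fun a _ => ?_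
  have h1 : p a * V (sel a) a ≤ ∑ b, p b * V (sel a) b :=
    Finset.single_le_sum (f := fun b => p b * V (sel a) b)
      (fun b _ => mul_nonneg (hp0 b) (hV0 _ b)) (Finset.mem_univ a)
  have h2 : V τ a ≤ V (sel a) a := by
    rw [hsel]
    exact le_ciSup (f := fun t => V t a) ⟨1, by rintro _ ⟨t, rfl⟩; exact hV1 t a⟩ τ
  have h3 := mul_le_mul_of_nonneg_left
    ((mul_le_mul_of_nonneg_left h2 (hp0 a)).trans h1) (hp0 a)
  have h4 := mul_nonneg (mul_nonneg (hp0 a) (sub_nonneg.2 (hple a))) (sub_nonneg.2 (hV1 τ a))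
  nlinarith [h3, h4]
end

section
/- Let A and B be nonempty finite sets and u : A → B → ℝ with 0 ≤ u a b ≤ 1 for all a, b. Let S be a nonempty finite set, p a probability vector on S, and for each g ∈ S let q_g be a probability vector on B and α_g a probability vector on A satisfying ∑_{a∈A} ∑_{b∈B} α_g a · q_g b · u a b = ⨆_{α} ∑_{a∈A} ∑_{b∈B} α a · q_g b · u a b, where the supremum is over probability vectors α on A. Define ᾱ a := ∑_{g∈S} p g · α_g a and q̄ b := ∑_{g∈S} p g · q_g b. Then ∑_{a∈A} ∑_{b∈B} ᾱ a · q̄ b · u a b ≥ ( ⨆_{α} ∑_{a∈A} ∑_{b∈B} α a · q̄ b · u a b ) − ( 1 − ∑_{g∈S} (p g)² ). (This is the statement that myopic posterior-sampling best response is a D-best response to the one-step posterior predictive belief, with D = 1 − ∑_g (p g)² the posterior collision complement.) -/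
/-- A probability vector on a finite set `S`. -/
def IsProbVec {S : Type*} [Fintype S] (p : S → ℝ) : Prop :=
  (∀ s, 0 ≤ p s) ∧ ∑ s, p s = 1

theorem aux_bd {A B : Type*} [Fintype A] [Fintype B] (u : A → B → ℝ)
    (hu0 : ∀ a b, 0 ≤ u a b) (hu1 : ∀ a b, u a b ≤ 1)
    (x : A → ℝ) (y : B → ℝ) (hx : IsProbVec x) (hy : IsProbVec y) :
    0 ≤ ∑ a, ∑ b, x a * y b * u a b ∧ ∑ a, ∑ b, x a * y b * u a b ≤ 1 := by
  constructor
  · exact Finset.sum_nonneg fun a _ => Finset.sum_nonneg fun b _ =>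
      mul_nonneg (mul_nonneg (hx.1 a) (hy.1 b)) (hu0 a b)
  · calc ∑ a, ∑ b, x a * y b * u a b ≤ ∑ a, ∑ b, x a * y b :=
          Finset.sum_le_sum fun a _ => Finset.sum_le_sum fun b _ =>
            mul_le_of_le_one_right (mul_nonneg (hx.1 a) (hy.1 b)) (hu1 a b)
      _ = 1 := by rw [← Finset.sum_mul_sum, hx.2, hy.2, one_mul]

theorem aux_right {A B S : Type*} [Fintype A] [Fintype B] [Fintype S] (u : A → B → ℝ)
    (p : S → ℝ) (q : S → B → ℝ) (x : A → ℝ) :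
    ∑ a, ∑ b, x a * (∑ g, p g * q g b) * u a b =
      ∑ g, p g * ∑ a, ∑ b, x a * q g b * u a b := by
  simp only [Finset.mul_sum, Finset.sum_mul]
  rw [Finset.sum_congr rfl fun a _ => Finset.sum_comm]
  rw [Finset.sum_comm]
  exact Finset.sum_congr rfl fun g _ => Finset.sum_congr rfl fun a _ =>
    Finset.sum_congr rfl fun b _ => by ring

theorem aux_left {A B S : Type*} [Fintype A] [Fintype B] [Fintype S] (u : A → B → ℝ)
    (p : S → ℝ) (α : S → A → ℝ) (y : B → ℝ) :
    ∑ a, ∑ b, (∑ g, p g * α g a) * y b * u a b =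
      ∑ g, p g * ∑ a, ∑ b, α g a * y b * u a b := by
  simp only [Finset.mul_sum, Finset.sum_mul]
  rw [Finset.sum_congr rfl fun a _ => Finset.sum_comm]
  rw [Finset.sum_comm]
  exact Finset.sum_congr rfl fun g _ => Finset.sum_congr rfl fun a _ =>
    Finset.sum_congr rfl fun b _ => by ring

/-- **Myopic PS-BR is a `D`-stage best response.** For each hypothesis `g`,
`α g` is a stage best response (over mixed actions) to the belief `q g`; then the
posterior-averaged mixed action `ᾱ = ∑ g, p g • α g` is a
`D = 1 - ∑ g, (p g)^2` best response to the one-step posterior predictive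
belief `q̄ = ∑ g, p g • q g`. -/
theorem myopic_psbr_is_D_best_response {A B S : Type*}
    [Fintype A] [Nonempty A] [Fintype B] [Nonempty B] [Fintype S] [Nonempty S]
    (u : A → B → ℝ) (hu0 : ∀ a b, 0 ≤ u a b) (hu1 : ∀ a b, u a b ≤ 1)
    (p : S → ℝ) (hp : IsProbVec p)
    (q : S → B → ℝ) (hq : ∀ g, IsProbVec (q g))
    (α : S → A → ℝ) (hα : ∀ g, IsProbVec (α g))
    (hbr : ∀ g, ∑ a, ∑ b, α g a * q g b * u a b =
      ⨆ β : {β : A → ℝ // IsProbVec β}, ∑ a, ∑ b, β.1 a * q g b * u a b) :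
    ∑ a, ∑ b, (∑ g, p g * α g a) * (∑ g, p g * q g b) * u a b ≥
      (⨆ β : {β : A → ℝ // IsProbVec β},
          ∑ a, ∑ b, β.1 a * (∑ g, p g * q g b) * u a b) -
        (1 - ∑ g, (p g) ^ 2) := by
  have hE := fun g h => aux_bd u hu0 hu1 (α g) (q h) (hα g) (hq h)
  have hle : ∀ g (β : {β : A → ℝ // IsProbVec β}),
      ∑ a, ∑ b, β.1 a * q g b * u a b ≤ ∑ a, ∑ b, α g a * q g b * u a b := by
    intro g β
    rw [hbr g]
    refine le_ciSup (f := fun β : {β : A → ℝ // IsProbVec β} =>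
      ∑ a, ∑ b, β.1 a * q g b * u a b) ⟨1, ?_⟩ β
    rintro _ ⟨γ, rfl⟩
    exact (aux_bd u hu0 hu1 γ.1 (q g) γ.2 (hq g)).2
  have hne : Nonempty {β : A → ℝ // IsProbVec β} :=
    ⟨⟨α (Classical.arbitrary S), hα _⟩⟩
  have hsup : (⨆ β : {β : A → ℝ // IsProbVec β},
      ∑ a, ∑ b, β.1 a * (∑ g, p g * q g b) * u a b) ≤
      ∑ g, p g * ∑ a, ∑ b, α g a * q g b * u a b := by
    refine ciSup_le fun β => ?_
    rw [aux_right]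
    exact Finset.sum_le_sum fun g _ => mul_le_mul_of_nonneg_left (hle g β) (hp.1 g)
  have hlow : ∑ g, p g * (p g * ∑ a, ∑ b, α g a * q g b * u a b) ≤
      ∑ a, ∑ b, (∑ g, p g * α g a) * (∑ g, p g * q g b) * u a b := by
    rw [aux_left u p α (fun b => ∑ g, p g * q g b)]
    refine Finset.sum_le_sum fun g _ => mul_le_mul_of_nonneg_left ?_ (hp.1 g)
    rw [aux_right]
    exact Finset.single_le_sum
      (f := fun h => p h * ∑ a, ∑ b, α g a * q h b * u a b)
      (fun h _ => mul_nonneg (hp.1 h) (hE g h).1) (Finset.mem_univ g)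
  have hp1 : ∀ g, p g ≤ 1 := fun g => by
    rw [← hp.2]
    exact Finset.single_le_sum (fun h _ => hp.1 h) (Finset.mem_univ g)
  have hmid : ∑ g, p g * ∑ a, ∑ b, α g a * q g b * u a b -
      ∑ g, p g * (p g * ∑ a, ∑ b, α g a * q g b * u a b) ≤ 1 - ∑ g, (p g) ^ 2 := by
    rw [← hp.2, ← Finset.sum_sub_distrib, ← Finset.sum_sub_distrib]
    refine Finset.sum_le_sum fun g _ => ?_
    have h1 := mul_nonneg (mul_nonneg (hp.1 g) (sub_nonneg.2 (hp1 g)))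
      (sub_nonneg.2 (hE g g).2)
    linarith
  linarith
end

section
/- Let (Ω, 𝒜, μ) be a probability space and 𝔉 : ℕ → sub-σ-algebras of 𝒜 a filtration (𝔉 s ⊆ 𝔉 (s+1) for all s). Let S be a nonempty finite set, f ∈ S, and π₀ : S → ℝ with π₀ g > 0 for all g and ∑_{g∈S} π₀ g = 1. Fix ν ∈ (0,1), and for each g ∈ S let ℓ g : ℕ → Ω → ℝ be a sequence of random variables such that ℓ g s is 𝔉(s+1)-measurable and ν ≤ ℓ g s ω ≤ 1 for all s and ω. Assume that for every g ∈ S with g ≠ f there exists κ_g > 0 such that μ-almost surely, liminf_{T→∞} (1/T) ∑_{s=0}^{T−1} μ[ log( ℓ f s / ℓ g s ) | 𝔉 s ] ≥ κ_g. Define the posterior π_t g ω := ( π₀ g · ∏_{s<t} ℓ g s ω ) / ( ∑_{g'∈S} π₀ g' · ∏_{s<t} ℓ g' s ω ). Then μ-almost surely, π_t f ω → 1 as t → ∞; equivalently, max_{g ∈ S, g ≠ f} π_t g ω → 0 μ-almost surely. (Posterior concentration on a finite cautious hypothesis menu under on-path Kullback–Leibler separation.) -/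
open MeasureTheory Filter

lemma pc_bc {Ω : Type*} [m0 : MeasurableSpace Ω] (μ : Measure Ω) 
    (W : ℕ → Ω → ℝ) (hW0 : ∀ T ω, 0 ≤ W T ω) (hWi : ∀ T, Integrable (W T) μ)
    (r : ℝ) (hr0 : 0 ≤ r) (hr1 : r < 1) (hW : ∀ T, ∫ ω, W T ω ∂μ ≤ r ^ T) :
    ∀ᵐ ω ∂μ, ∀ᶠ T in atTop, W T ω < 1 := by
  have h1 : ∀ T, μ {ω | 1 ≤ W T ω} ≤ ENNReal.ofReal (r ^ T) := by
    intro T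
    have h2 : μ {ω | 1 ≤ W T ω} ≤ ∫⁻ ω, ENNReal.ofReal (W T ω) ∂μ := by
      have := mul_meas_ge_le_lintegral₀ (μ := μ) (hWi T).aemeasurable.ennreal_ofReal 1
      simpa using this
    rw [← ofReal_integral_eq_lintegral_ofReal (hWi T) (ae_of_all _ (hW0 T))] at h2
    exact h2.trans (ENNReal.ofReal_le_ofReal (hW T))
  have hs : ∑' T, μ {ω | 1 ≤ W T ω} ≠ ⊤ := by
    refine ne_top_of_le_ne_top ?_ (ENNReal.tsum_le_tsum h1)
    exact (summable_geometric_of_lt_one hr0 hr1).tsum_ofReal_ne_top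
  filter_upwards [ae_eventually_notMem hs] with ω hω
  filter_upwards [hω] with T hT
  simpa using hT

lemma pc_slln {Ω : Type*} [m0 : MeasurableSpace Ω]
    (μ : Measure Ω) [IsProbabilityMeasure μ]
    (F : ℕ → MeasurableSpace Ω) (hF_le : ∀ s, F s ≤ m0) (hF_mono : ∀ s, F s ≤ F (s + 1))
    (X : ℕ → Ω → ℝ) (L : ℝ) (hL : 0 < L)
    (hmeas : ∀ s, Measurable[F (s + 1)] (X s)) (hX : ∀ s ω, |X s ω| ≤ L)
    (ε : ℝ) (hε : 0 < ε) :
    ∀ᵐ ω ∂μ, ∀ᶠ T : ℕ in atTop,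
      -(ε * T) < ∑ s ∈ Finset.range T, (X s ω - (μ[X s | F s]) ω) := by
  have hXi : ∀ s, Integrable (X s) μ := fun s =>
    Integrable.of_bound ((hmeas s).mono (hF_le _) le_rfl).aestronglyMeasurable L
      (ae_of_all _ (hX s))
  have hYb : ∀ s, ∀ᵐ ω ∂μ, |(μ[X s | F s]) ω| ≤ L := by
    intro s
    have := ae_bdd_abs_condExp_of_ae_bdd_abs (μ := μ) (m := F s) (R := L) (f := X s)
      (ae_of_all _ (hX s))
    simpa using this
  set C := 2 * L with hC
  have hCpos : 0 < C := by positivity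
  set D : ℕ → Ω → ℝ := fun s ω => X s ω - (μ[X s | F s]) ω with hD
  have hDb : ∀ᵐ ω ∂μ, ∀ s, |D s ω| ≤ C := by
    rw [ae_all_iff]
    intro s
    filter_upwards [hYb s] with ω hω
    calc |D s ω| ≤ |X s ω| + |(μ[X s | F s]) ω| := abs_sub _ _
      _ ≤ C := by linarith [hX s ω]
  have hYm : ∀ s, Measurable[F s] (μ[X s | F s]) := fun s =>
    stronglyMeasurable_condExp.measurable
  have hDm : ∀ s, Measurable[F (s+1)] (D s) := fun s =>
    (hmeas s).sub ((hYm s).mono (hF_mono s) le_rfl)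
  have hDm0 : ∀ s, Measurable (D s) := fun s => (hDm s).mono (hF_le _) le_rfl
  have hDi : ∀ s, Integrable (D s) μ := fun s => (hXi s).sub integrable_condExp
  set l := ε / (2 * C * (C + ε)) with hl
  have hlpos : 0 < l := by positivity
  have hlC : l * C ≤ 1 := by
    rw [hl, div_mul_eq_mul_div, div_le_one (by positivity)]
    nlinarith [mul_pos hCpos hε, mul_pos hCpos hCpos]
  have hlC2 : l * C ^ 2 ≤ ε / 2 := by
    rw [hl, div_mul_eq_mul_div, div_le_div_iff₀ (by positivity) (by positivity)]
    nlinarith [mul_pos hCpos hε, mul_pos (mul_pos hCpos hε) hε]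
  set W : ℕ → Ω → ℝ := fun T ω => Real.exp (-l * ∑ s ∈ Finset.range T, (D s ω + ε)) with hW
  have hF : Monotone F := monotone_nat_of_le_succ hF_mono
  have hWm : ∀ T, Measurable[F T] (W T) := by
    intro T
    refine Real.measurable_exp.comp (Measurable.const_mul ?_ _)
    refine Finset.measurable_sum _ fun s hs => ?_
    have hs' : s + 1 ≤ T := Finset.mem_range.1 hs
    exact ((hDm s).mono (hF hs') le_rfl).add_const _
  have hWpos : ∀ T ω, 0 < W T ω := fun T ω => Real.exp_pos _
  have hWb : ∀ T, ∀ᵐ ω ∂μ, ‖W T ω‖ ≤ Real.exp (l * (T * (C + ε))) := by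
    intro T
    filter_upwards [hDb] with ω hω
    rw [Real.norm_eq_abs, abs_of_pos (hWpos _ _)]
    apply Real.exp_le_exp.2
    have : ∑ s ∈ Finset.range T, -(D s ω + ε) ≤ ∑ s ∈ Finset.range T, (C + ε) :=
      Finset.sum_le_sum fun s _ => by linarith [(abs_le.1 (hω s)).1]
    rw [Finset.sum_neg_distrib] at this
    simp only [Finset.sum_const, Finset.card_range, nsmul_eq_mul] at this
    nlinarith
  have hWm0 : ∀ T, AEStronglyMeasurable (W T) μ := fun T =>
    ((hWm T).mono (hF_le T) le_rfl).aestronglyMeasurable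
  have hWi : ∀ T, Integrable (W T) μ := fun T => Integrable.of_bound (hWm0 T) _ (hWb T)
  have hWD : ∀ T, Integrable (fun ω => W T ω * D T ω) μ := fun T =>
    (hDi T).bdd_mul (hWm0 T) (hWb T)
  have hWD0 : ∀ T, ∫ ω, W T ω * D T ω ∂μ = 0 := by
    intro T
    have e1 : μ[W T * D T | F T] =ᵐ[μ] W T * μ[D T | F T] :=
      condExp_mul_of_stronglyMeasurable_left (hWm T).stronglyMeasurable (hWD T) (hDi T)
    have e2 : μ[D T | F T] =ᵐ[μ] 0 := by
      have h := condExp_sub (hXi T) (integrable_condExp (μ := μ) (m := F T) (f := X T)) (F T)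
      have h' : μ[μ[X T | F T] | F T] = μ[X T | F T] :=
        condExp_of_stronglyMeasurable (hF_le T) stronglyMeasurable_condExp integrable_condExp
      rw [h', sub_self] at h
      exact h
    have e3 : ∫ ω, (μ[W T * D T | F T]) ω ∂μ = ∫ ω, W T ω * D T ω ∂μ :=
      integral_condExp (hF_le T)
    rw [← e3]
    apply integral_eq_zero_of_ae
    filter_upwards [e1, e2] with ω h1 h2
    rw [h1, Pi.mul_apply, h2]; simp
  have hstep : ∀ T, ∫ ω, W (T+1) ω ∂μ ≤ Real.exp (-(l * ε / 2)) * ∫ ω, W T ω ∂μ := by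
    intro T
    have hle : W (T+1) ≤ᵐ[μ] fun ω =>
        Real.exp (-(l * ε / 2)) * W T ω - l * Real.exp (-(l*ε)) * (W T ω * D T ω) := by
      filter_upwards [hDb] with ω hω
      have hd := hω T
      have e1 : W (T+1) ω = W T ω * Real.exp (-(l*ε)) * Real.exp (-l * D T ω) := by
        simp only [hW, Finset.sum_range_succ, ← Real.exp_add]
        congr 1; ring
      have hx : |-l * D T ω| ≤ 1 := by
        rw [abs_mul, abs_neg, abs_of_pos hlpos]; nlinarith
      have e2 := (abs_le.1 (Real.abs_exp_sub_one_sub_id_le hx)).2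
      have e3 : (-l * D T ω)^2 ≤ l * ε / 2 := by
        have : D T ω ^ 2 ≤ C ^ 2 := sq_le_sq' (abs_le.1 hd).1 (abs_le.1 hd).2
        nlinarith [mul_le_mul_of_nonneg_left this (sq_nonneg l)]
      have e4 : Real.exp (-l * D T ω) ≤ Real.exp (l*ε/2) - l * D T ω := by
        linarith [Real.add_one_le_exp (l*ε/2)]
      have e5 : Real.exp (-(l * ε / 2)) = Real.exp (-(l*ε)) * Real.exp (l*ε/2) := by
        rw [← Real.exp_add]; congr 1; ring
      rw [e1, e5]
      have := mul_le_mul_of_nonneg_left e4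
        (mul_pos (hWpos T ω) (Real.exp_pos (-(l*ε)))).le
      linarith
    have hi := integral_mono_ae (hWi (T+1))
      (((hWi T).const_mul _).sub ((hWD T).const_mul _)) hle
    refine hi.trans_eq ?_
    simp only [Pi.sub_apply]
    rw [integral_sub ((hWi T).const_mul _) ((hWD T).const_mul _), integral_const_mul,
      integral_const_mul, hWD0]
    ring
  have hWT : ∀ T, ∫ ω, W T ω ∂μ ≤ Real.exp (-(l * ε / 2)) ^ T := by
    intro T
    induction T with
    | zero => simp [hW]
    | succ T ih =>
      rw [pow_succ']
      exact (hstep T).trans (mul_le_mul_of_nonneg_left ih (Real.exp_pos _).le)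
  have hfin := pc_bc μ W (fun T ω => (hWpos T ω).le) hWi _ (Real.exp_pos _).le
    (Real.exp_lt_one_iff.2 (by have := mul_pos hlpos hε; linarith)) hWT
  filter_upwards [hfin] with ω hω
  filter_upwards [hω] with T hT
  simp only [hW, Real.exp_lt_one_iff, Finset.sum_add_distrib, Finset.sum_const,
    Finset.card_range, nsmul_eq_mul] at hT
  by_contra hcon
  push Not at hcon
  have : ∑ s ∈ Finset.range T, D s ω + T * ε ≤ 0 := by linarith
  nlinarith

lemma pc_ratio {Ω : Type*} [m0 : MeasurableSpace Ω]
    (μ : Measure Ω) [IsProbabilityMeasure μ]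
    (F : ℕ → MeasurableSpace Ω) (hF_le : ∀ s, F s ≤ m0) (hF_mono : ∀ s, F s ≤ F (s + 1))
    (ν : ℝ) (hν : ν ∈ Set.Ioo (0 : ℝ) 1) (a b : ℕ → Ω → ℝ)
    (ham : ∀ s, Measurable[F (s + 1)] (a s)) (hbm : ∀ s, Measurable[F (s + 1)] (b s))
    (ha : ∀ s ω, a s ω ∈ Set.Icc ν 1) (hb : ∀ s ω, b s ω ∈ Set.Icc ν 1)
    (κ : ℝ) (hκ : 0 < κ)
    (hKL : ∀ᵐ ω ∂μ,
      κ ≤ atTop.liminf fun T : ℕ =>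
        (1 / (T : ℝ)) * ∑ s ∈ Finset.range T,
          (μ[fun ω' => Real.log (a s ω' / b s ω') | F s]) ω) :
    ∀ᵐ ω ∂μ, Tendsto (fun t : ℕ =>
      (∏ s ∈ Finset.range t, b s ω) / ∏ s ∈ Finset.range t, a s ω) atTop (nhds 0) := by
  obtain ⟨hν0, hν1⟩ := hν
  set L := -Real.log ν with hLdef
  have hL : 0 < L := by have := Real.log_neg hν0 hν1; linarith
  set X : ℕ → Ω → ℝ := fun s ω' => Real.log (a s ω' / b s ω') with hXdef
  have hap : ∀ s ω, 0 < a s ω := fun s ω => hν0.trans_le (ha s ω).1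
  have hbp : ∀ s ω, 0 < b s ω := fun s ω => hν0.trans_le (hb s ω).1
  have hXe : ∀ s ω, X s ω = Real.log (a s ω) - Real.log (b s ω) := fun s ω =>
    Real.log_div (hap s ω).ne' (hbp s ω).ne'
  have hX : ∀ s ω, |X s ω| ≤ L := by
    intro s ω
    rw [hXe, abs_le]
    have h1 := Real.log_le_log hν0 (ha s ω).1
    have h2 := Real.log_le_log hν0 (hb s ω).1
    have h3 := Real.log_nonpos (hap s ω).le (ha s ω).2
    have h4 := Real.log_nonpos (hbp s ω).le (hb s ω).2
    constructor <;> linarith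
  have hXm : ∀ s, Measurable[F (s + 1)] (X s) := fun s =>
    Real.measurable_log.comp ((ham s).div (hbm s))
  have hYb : ∀ᵐ ω ∂μ, ∀ s, |(μ[X s | F s]) ω| ≤ L := by
    rw [ae_all_iff]
    intro s
    have := ae_bdd_abs_condExp_of_ae_bdd_abs (μ := μ) (m := F s) (R := L) (f := X s)
      (ae_of_all _ (hX s))
    simpa using this
  filter_upwards [hKL, hYb, pc_slln μ F hF_le hF_mono X L hL hXm hX (κ/4) (by positivity)]
    with ω h1 h2 h3
  have hbd : IsBoundedUnder (· ≥ ·) atTop fun T : ℕ =>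
        (1 / (T : ℝ)) * ∑ s ∈ Finset.range T, (μ[X s | F s]) ω := by
    refine isBoundedUnder_of ⟨-L, fun T => ?_⟩
    have : ∑ s ∈ Finset.range T, -L ≤ ∑ s ∈ Finset.range T, (μ[X s | F s]) ω :=
      Finset.sum_le_sum fun s _ => (abs_le.1 (h2 s)).1
    simp only [Finset.sum_const, Finset.card_range, nsmul_eq_mul] at this
    rcases Nat.eq_zero_or_pos T with rfl | hT
    · simpa using hL.le
    · have hT' : (0:ℝ) < T := by exact_mod_cast hT
      change -L ≤ _
      rw [one_div_mul_eq_div, le_div_iff₀ hT']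
      linarith
  have h4 := eventually_lt_of_lt_liminf (show κ/2 < _ by exact lt_of_lt_of_le (by linarith) h1) hbd
  have h5 : ∀ᶠ T : ℕ in atTop, κ/4 * T ≤ ∑ s ∈ Finset.range T, X s ω := by
    filter_upwards [h3, h4, eventually_gt_atTop 0] with T h3 h4 hT
    have hT' : (0:ℝ) < T := by exact_mod_cast hT
    rw [one_div_mul_eq_div, lt_div_iff₀ hT'] at h4
    rw [Finset.sum_sub_distrib] at h3
    linarith
  have h6 : Tendsto (fun T : ℕ => ∑ s ∈ Finset.range T, X s ω) atTop atTop :=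
    tendsto_atTop_mono' _ h5
      (tendsto_natCast_atTop_atTop.const_mul_atTop (by positivity))
  refine (Real.tendsto_exp_neg_atTop_nhds_zero.comp h6).congr fun T => ?_
  simp only [Function.comp]
  rw [← Finset.prod_div_distrib, ← Finset.sum_neg_distrib, Real.exp_sum]
  refine Finset.prod_congr rfl fun s _ => ?_
  rw [Real.exp_neg, hXdef, Real.exp_log (div_pos (hap s ω) (hbp s ω)), inv_div]

/-- **Posterior concentration on a finite cautious hypothesis menu under on-path
KL separation.** Here `ℓ g s ω` is the probability the menu hypothesis `g` assigns
to the realized period-`s` observation, `f` is the true hypothesis, and the liminf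
hypothesis is the on-path KL-separation condition. The Bayes posterior over the
menu concentrates on `f` almost surely; equivalently, the maximum posterior mass
on wrong hypotheses vanishes. -/
theorem posterior_concentration_KL {Ω : Type*} [m0 : MeasurableSpace Ω]
    (μ : Measure Ω) [IsProbabilityMeasure μ]
    (F : ℕ → MeasurableSpace Ω) (hF_le : ∀ s, F s ≤ m0) (hF_mono : ∀ s, F s ≤ F (s + 1))
    {S : Type*} [Fintype S] [Nonempty S] (f : S)
    (π₀ : S → ℝ) (hπ₀ : ∀ g, 0 < π₀ g) (hπ₀sum : ∑ g, π₀ g = 1)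
    (ν : ℝ) (hν : ν ∈ Set.Ioo (0 : ℝ) 1)
    (ℓ : S → ℕ → Ω → ℝ)
    (hmeas : ∀ g s, Measurable[F (s + 1)] (ℓ g s))
    (hbound : ∀ g s ω, ℓ g s ω ∈ Set.Icc ν 1)
    (hKL : ∀ g, g ≠ f → ∃ κ > (0 : ℝ), ∀ᵐ ω ∂μ,
      κ ≤ atTop.liminf fun T : ℕ =>
        (1 / (T : ℝ)) * ∑ s ∈ Finset.range T,
          (μ[fun ω' => Real.log (ℓ f s ω' / ℓ g s ω') | F s]) ω) :
    ∀ᵐ ω ∂μ,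
      Tendsto (fun t : ℕ =>
          (π₀ f * ∏ s ∈ Finset.range t, ℓ f s ω) /
            ∑ g', π₀ g' * ∏ s ∈ Finset.range t, ℓ g' s ω)
        atTop (nhds 1) ∧
      Tendsto (fun t : ℕ =>
          ⨆ g : {g : S // g ≠ f},
            (π₀ g.1 * ∏ s ∈ Finset.range t, ℓ g.1 s ω) /
              ∑ g', π₀ g' * ∏ s ∈ Finset.range t, ℓ g' s ω)
        atTop (nhds 0) := by
  classical
  have hratio : ∀ᵐ ω ∂μ, ∀ g, g ≠ f → Tendsto (fun t : ℕ =>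
      (∏ s ∈ Finset.range t, ℓ g s ω) / ∏ s ∈ Finset.range t, ℓ f s ω) atTop (nhds 0) := by
    rw [ae_all_iff]
    intro g
    by_cases hg : g = f
    · exact ae_of_all _ fun ω h => absurd hg h
    obtain ⟨κ, hκ, h⟩ := hKL g hg
    filter_upwards [pc_ratio μ F hF_le hF_mono ν hν (ℓ f) (ℓ g) (hmeas f) (hmeas g)
      (hbound f) (hbound g) κ hκ h] with ω hω _
    exact hω
  filter_upwards [hratio] with ω hω
  have hP : ∀ g t, 0 < π₀ g * ∏ s ∈ Finset.range t, ℓ g s ω := fun g t =>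
    mul_pos (hπ₀ g) (Finset.prod_pos fun s _ => hν.1.trans_le (hbound g s ω).1)
  have hZ : ∀ t, 0 < ∑ g', π₀ g' * ∏ s ∈ Finset.range t, ℓ g' s ω := fun t =>
    Finset.sum_pos (fun g _ => hP g t) Finset.univ_nonempty
  set p : S → ℕ → ℝ := fun g t => (π₀ g * ∏ s ∈ Finset.range t, ℓ g s ω) /
            ∑ g', π₀ g' * ∏ s ∈ Finset.range t, ℓ g' s ω with hp
  have hp0 : ∀ g t, 0 ≤ p g t := fun g t => (div_pos (hP g t) (hZ t)).le
  have hsum : ∀ t, p f t + ∑ g ∈ Finset.univ.erase f, p g t = 1 := by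
    intro t
    rw [Finset.add_sum_erase _ (fun g => p g t) (Finset.mem_univ f)]
    simp only [hp]
    rw [← Finset.sum_div, div_self (hZ t).ne']
  have hpg : ∀ g, g ≠ f → Tendsto (p g) atTop (nhds 0) := by
    intro g hg
    have h := (hω g hg).const_mul (π₀ g / π₀ f)
    rw [mul_zero] at h
    refine squeeze_zero (hp0 g) (fun t => ?_) h
    rw [div_mul_div_comm]
    exact div_le_div_of_nonneg_left (hP g t).le (hP f t)
      (Finset.single_le_sum (f := fun g' => π₀ g' * ∏ s ∈ Finset.range t, ℓ g' s ω)
        (fun g _ => (hP g t).le) (Finset.mem_univ f))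
  have hrest : Tendsto (fun t => ∑ g ∈ Finset.univ.erase f, p g t) atTop (nhds 0) := by
    have := tendsto_finsetSum (Finset.univ.erase f) fun g hg => hpg g (Finset.ne_of_mem_erase hg)
    simpa using this
  constructor
  · have h := hrest.const_sub 1
    rw [sub_zero] at h
    exact h.congr fun t => by have := hsum t; change _ = p f t; linarith
  · refine squeeze_zero (fun t => Real.iSup_nonneg fun g => hp0 g.1 t) (fun t => ?_) hrest
    refine Real.iSup_le (fun g => ?_) (Finset.sum_nonneg fun g _ => hp0 g t)
    exact Finset.single_le_sum (f := fun g => p g t) (fun g _ => hp0 g t)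
      (Finset.mem_erase.2 ⟨g.2, Finset.mem_univ _⟩)
end

section
/- Let (Ω, 𝒜, μ) be a probability space and 𝔉 : ℕ → sub-σ-algebras of 𝒜 a filtration (𝔉 s ⊆ 𝔉 (s+1) for all s). Let c ≥ 0 and let Y : ℕ → Ω → ℝ be a sequence of random variables such that for every s: Y s is 𝔉(s+1)-measurable, |Y s ω| ≤ c for all ω, and μ[ Y s | 𝔉 s ] = 0 μ-almost everywhere. Then μ-almost surely, (1/T) ∑_{s=0}^{T−1} Y s ω → 0 as T → ∞. (Cesàro averages of a uniformly bounded martingale difference sequence converge to zero almost surely; this follows from the Azuma–Hoeffding inequality and the Borel–Cantelli lemma.) -/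
open MeasureTheory Filter

/-- **Cesàro averages of a uniformly bounded martingale difference sequence
converge to zero almost surely** (via Azuma–Hoeffding and Borel–Cantelli). -/
theorem bounded_mds_cesaro_to_zero {Ω : Type*} [m0 : MeasurableSpace Ω]
    (μ : Measure Ω) [IsProbabilityMeasure μ]
    (F : ℕ → MeasurableSpace Ω) (hF_le : ∀ s, F s ≤ m0) (hF_mono : ∀ s, F s ≤ F (s + 1))
    (c : ℝ) (hc : 0 ≤ c) (Y : ℕ → Ω → ℝ)
    (hmeas : ∀ s, Measurable[F (s + 1)] (Y s))
    (hbdd : ∀ s ω, |Y s ω| ≤ c)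
    (hmds : ∀ s, μ[Y s | F s] =ᵐ[μ] 0) :
    ∀ᵐ ω ∂μ,
      Tendsto (fun T : ℕ => (1 / (T : ℝ)) * ∑ s ∈ Finset.range T, Y s ω)
        atTop (nhds 0) := by
  classical
  set S : ℕ → Ω → ℝ := fun n ω => ∑ s ∈ Finset.range n, Y s ω with hS
  have hFm : Monotone F := monotone_nat_of_le_succ hF_mono
  have hSmeas : ∀ n, Measurable[F n] (S n) := by
    intro n
    refine Finset.measurable_fun_sum _ fun s hs => ?_
    exact (hmeas s).mono (hFm (Finset.mem_range.1 hs)) le_rfl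
  have hSm0 : ∀ n, Measurable (S n) := fun n => (hSmeas n).mono (hF_le n) le_rfl
  have hYm0 : ∀ n, Measurable (Y n) := fun n => (hmeas n).mono (hF_le _) le_rfl
  have hSb : ∀ n ω, |S n ω| ≤ n * c := by
    intro n ω
    calc |S n ω| ≤ ∑ s ∈ Finset.range n, |Y s ω| := Finset.abs_sum_le_sum_abs _ _
      _ ≤ ∑ s ∈ Finset.range n, c := Finset.sum_le_sum fun s _ => hbdd s ω
      _ = n * c := by simp
  have hYint : ∀ n, Integrable (Y n) μ := fun n =>
    Integrable.of_bound (hYm0 n).aestronglyMeasurable c (ae_of_all _ fun ω => hbdd n ω)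
  have hSint : ∀ n, Integrable (S n) μ := fun n =>
    Integrable.of_bound (hSm0 n).aestronglyMeasurable (n * c) (ae_of_all _ fun ω => hSb n ω)
  have hSYint : ∀ n, Integrable (fun ω => S n ω * Y n ω) μ := fun n =>
    (hYint n).bdd_mul (hSm0 n).aestronglyMeasurable (ae_of_all _ fun ω => hSb n ω)
  have hS2int : ∀ n, Integrable (fun ω => S n ω ^ 2) μ := fun n => by
    simp only [pow_two]
    exact (hSint n).bdd_mul (hSm0 n).aestronglyMeasurable (ae_of_all _ fun ω => hSb n ω)
  have hY2int : ∀ n, Integrable (fun ω => Y n ω ^ 2) μ := fun n => by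
    simp only [pow_two]
    exact (hYint n).bdd_mul (hYm0 n).aestronglyMeasurable (ae_of_all _ fun ω => hbdd n ω)
  have horth : ∀ n, ∫ ω, S n ω * Y n ω ∂μ = 0 := by
    intro n
    have h1 : μ[S n * Y n | F n] =ᵐ[μ] S n * μ[Y n | F n] :=
      condExp_mul_of_stronglyMeasurable_left (hSmeas n).stronglyMeasurable (hSYint n) (hYint n)
    have h2 : ∫ ω, (μ[S n * Y n | F n]) ω ∂μ = ∫ ω, (S n * Y n) ω ∂μ :=
      integral_condExp (hF_le n)
    have h3 : ∫ ω, (μ[S n * Y n | F n]) ω ∂μ = 0 := by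
      apply integral_eq_zero_of_ae
      filter_upwards [h1, hmds n] with ω ha hb
      rw [ha, Pi.mul_apply, hb]; simp
    rw [h3] at h2
    exact h2.symm
  have hvar : ∀ n : ℕ, ∫ ω, S n ω ^ 2 ∂μ ≤ n * c ^ 2 := by
    intro n
    induction n with
    | zero => simp [hS]
    | succ n ih =>
      have e : ∀ ω, S (n + 1) ω ^ 2 = S n ω ^ 2 + 2 * (S n ω * Y n ω) + Y n ω ^ 2 := by
        intro ω
        simp only [hS, Finset.sum_range_succ]; ring
      have hy : ∫ ω, Y n ω ^ 2 ∂μ ≤ c ^ 2 := by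
        have := integral_mono (hY2int n) (integrable_const (c ^ 2))
          (fun ω => sq_le_sq' (abs_le.1 (hbdd n ω)).1 (abs_le.1 (hbdd n ω)).2)
        simpa using this
      simp_rw [e]
      have h2 := (hSYint n).const_mul 2
      have h3 : Integrable (fun ω => S n ω ^ 2 + 2 * (S n ω * Y n ω)) μ := (hS2int n).add h2
      rw [integral_add h3 (hY2int n), integral_add (hS2int n) h2,
        integral_const_mul, horth n]
      push_cast
      linarith
  have hsub : ∀ᵐ ω ∂μ, Tendsto (fun n : ℕ => S (n ^ 2) ω / ((n ^ 2 : ℕ) : ℝ)) atTop (nhds 0) := by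
    let f : ℕ → Ω → ENNReal := fun n ω => ENNReal.ofReal ((S (n ^ 2) ω / ((n ^ 2 : ℕ) : ℝ)) ^ 2)
    have hfm : ∀ n, Measurable (f n) := fun n =>
      (((hSm0 (n ^ 2)).div_const _).pow_const 2).ennreal_ofReal
    have hfi : ∀ n, ∫⁻ ω, f n ω ∂μ ≤ ENNReal.ofReal (c ^ 2 * (1 / (n : ℝ) ^ 2)) := by
      intro n
      have hint : Integrable (fun ω => (S (n ^ 2) ω / ((n ^ 2 : ℕ) : ℝ)) ^ 2) μ := by
        simp only [div_pow]
        exact (hS2int _).div_const _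
      rw [← ofReal_integral_eq_lintegral_ofReal hint (ae_of_all _ fun ω => sq_nonneg _)]
      apply ENNReal.ofReal_le_ofReal
      simp only [div_pow]
      rw [integral_div]
      rcases Nat.eq_zero_or_pos n with rfl | hn
      · simp
      have hn' : (0 : ℝ) < n := by exact_mod_cast hn
      rw [div_le_iff₀ (by positivity)]
      refine (hvar (n ^ 2)).trans (le_of_eq ?_)
      push_cast
      field_simp
    have hsum : ∑' n, ∫⁻ ω, f n ω ∂μ ≠ ⊤ := by
      have hs : Summable fun n : ℕ => c ^ 2 * (1 / (n : ℝ) ^ 2) :=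
        (Real.summable_one_div_nat_pow.2 one_lt_two).mul_left _
      exact ne_top_of_le_ne_top hs.tsum_ofReal_ne_top (ENNReal.tsum_le_tsum hfi)
    rw [← lintegral_tsum fun n => (hfm n).aemeasurable] at hsum
    filter_upwards [ae_lt_top (Measurable.ennreal_tsum hfm) hsum] with ω hω
    have h0 := ENNReal.tendsto_atTop_zero_of_tsum_ne_top hω.ne
    have h1 := (ENNReal.tendsto_toReal ENNReal.zero_ne_top).comp h0
    have h2 : Tendsto (fun n : ℕ => (S (n ^ 2) ω / ((n ^ 2 : ℕ) : ℝ)) ^ 2) atTop (nhds 0) := by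
      refine h1.congr fun n => ?_
      simp only [f, Function.comp]
      exact ENNReal.toReal_ofReal (sq_nonneg _)
    have h3 := h2.sqrt
    simp only [Real.sqrt_sq_eq_abs, Real.sqrt_zero] at h3
    exact (tendsto_zero_iff_abs_tendsto_zero _).2 h3
  filter_upwards [hsub] with ω hω
  have key : Tendsto (fun n : ℕ => (S n ω + n * c) / (n : ℝ)) atTop (nhds c) := by
    refine tendsto_div_of_monotone_of_exists_subseq_tendsto_div (fun n => S n ω + n * c) c ?_ ?_
    · refine monotone_nat_of_le_succ fun n => ?_
      simp only [hS, Finset.sum_range_succ]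
      push_cast
      linarith [(abs_le.1 (hbdd n ω)).1]
    · intro a ha
      refine ⟨fun n => n ^ 2, ?_, tendsto_pow_atTop two_ne_zero, ?_⟩
      · filter_upwards [eventually_ge_atTop (max 1 ⌈3 / (a - 1)⌉₊)] with n hn
        have h1 : (1 : ℝ) ≤ n := by exact_mod_cast (le_max_left _ _).trans hn
        have h2 : 3 / (a - 1) ≤ n := Nat.ceil_le.1 ((le_max_right _ _).trans hn)
        rw [div_le_iff₀ (by linarith)] at h2
        push_cast
        nlinarith
      · have h := hω.add_const c
        rw [zero_add] at h
        refine h.congr' ?_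
        filter_upwards [eventually_ge_atTop 1] with n hn
        have hn' : (0 : ℝ) < n := by exact_mod_cast hn
        push_cast
        field_simp
  have h := key.sub_const c
  rw [sub_self] at h
  refine h.congr' ?_
  filter_upwards [eventually_ge_atTop 1] with n hn
  have hn' : (0 : ℝ) < n := by exact_mod_cast hn
  simp only [hS]
  field_simp
  ring
end

section
/- Let (Ω, 𝒜, μ) be a probability space and 𝔉 : ℕ → sub-σ-algebras of 𝒜 a filtration (𝔉 s ⊆ 𝔉 (s+1) for all s). Let C ≥ 0 and let X : ℕ → Ω → ℝ be a sequence of random variables such that for every s: X s is 𝔉(s+1)-measurable and |X s ω| ≤ C for all ω. Suppose there exists κ > 0 such that μ-almost surely, liminf_{T→∞} (1/T) ∑_{s=0}^{T−1} μ[ X s | 𝔉 s ] ≥ κ. Then μ-almost surely, ∑_{s=0}^{T−1} X s ω → +∞ as T → ∞ (i.e., the partial sums tend to infinity). (Partial sums of a bounded adapted sequence whose conditional-mean Cesàro averages are eventually bounded below by a positive constant diverge to infinity almost surely.) -/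
open MeasureTheory Filter

/-- Deterministic part. -/
lemma aux_det (x a : ℕ → ℝ) (C κ : ℝ) (hκ : 0 < κ)
    (hd : ∀ s, |x s - a s| ≤ 2 * C)
    (hA : ∀ᶠ T : ℕ in atTop, κ / 2 * T ≤ ∑ s ∈ Finset.range T, a s)
    (hM : ∀ᶠ k : ℕ in atTop,
      |∑ s ∈ Finset.range (k ^ 2), (x s - a s)| ≤ κ / 8 * (k : ℝ) ^ 2) :
    Tendsto (fun T : ℕ => ∑ s ∈ Finset.range T, x s) atTop atTop := by
  have hC : 0 ≤ C := by have := (abs_nonneg _).trans (hd 0); linarith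
  have hsq : Tendsto Nat.sqrt atTop atTop := by
    refine tendsto_atTop.2 fun b => ?_
    filter_upwards [eventually_ge_atTop (b * b)] with T hT
    exact Nat.le_sqrt.2 hT
  have hk : ∀ᶠ k : ℕ in atTop, (4 * C + 1) / (3 * κ / 8) ≤ (k : ℝ) :=
    tendsto_natCast_atTop_atTop.eventually_ge_atTop _
  refine tendsto_atTop_mono' atTop ?_ (tendsto_natCast_atTop_atTop.comp hsq)
  filter_upwards [hA, hsq.eventually hM, hsq.eventually hk] with T h1 h2 h3
  simp only [Function.comp]
  generalize hkdef : Nat.sqrt T = k at *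
  have hkT : k ^ 2 ≤ T := by rw [pow_two, ← hkdef]; exact Nat.sqrt_le T
  have hTk : T ≤ k ^ 2 + 2 * k := by
    have := Nat.sqrt_le_add T
    rw [hkdef] at this
    nlinarith
  obtain ⟨j, rfl⟩ := Nat.exists_eq_add_of_le hkT
  have hj : (j : ℝ) ≤ 2 * k := by
    have : j ≤ 2 * k := by omega
    exact_mod_cast this
  have hrem : |∑ i ∈ Finset.range j, (x (k ^ 2 + i) - a (k ^ 2 + i))| ≤ j * (2 * C) := by
    refine (Finset.abs_sum_le_sum_abs _ _).trans ?_
    refine (Finset.sum_le_card_nsmul _ _ (2 * C) fun i _ => hd _).trans ?_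
    simp
  have hdec : ∑ s ∈ Finset.range (k ^ 2 + j), x s =
      ∑ s ∈ Finset.range (k ^ 2 + j), a s + (∑ s ∈ Finset.range (k ^ 2), (x s - a s)
        + ∑ i ∈ Finset.range j, (x (k ^ 2 + i) - a (k ^ 2 + i))) := by
    rw [← Finset.sum_range_add (fun s => x s - a s), Finset.sum_sub_distrib]
    ring
  rw [hdec]
  rw [div_le_iff₀ (by positivity)] at h3
  push_cast at h1
  have e2 := (abs_le.1 h2).1
  have e3 := (abs_le.1 hrem).1
  have hk0 : (0 : ℝ) ≤ k := Nat.cast_nonneg k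
  have hj0 : (0 : ℝ) ≤ j := Nat.cast_nonneg j
  have e4 : (j : ℝ) * (2 * C) ≤ 2 * k * (2 * C) := by gcongr
  have e5 : (k : ℝ) * (4 * C + 1) ≤ k * (k * (3 * κ / 8)) := by gcongr
  have e6 : 0 ≤ κ / 2 * (j : ℝ) := by positivity
  nlinarith

lemma aux_sq {Ω : Type*} [m0 : MeasurableSpace Ω]
    (μ : Measure Ω) [IsProbabilityMeasure μ]
    (F : ℕ → MeasurableSpace Ω) (hF_le : ∀ s, F s ≤ m0) (hF_mono : ∀ s, F s ≤ F (s + 1))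
    (B : ℝ) (hB : 0 ≤ B) (D : ℕ → Ω → ℝ)
    (hmeas : ∀ s, StronglyMeasurable[F (s + 1)] (D s))
    (hbdd : ∀ s, ∀ᵐ ω ∂μ, |D s ω| ≤ B)
    (hD : ∀ s, μ[D s | F s] =ᵐ[μ] 0) (n : ℕ) :
    StronglyMeasurable[F n] (fun ω => ∑ s ∈ Finset.range n, D s ω) ∧
    MemLp (fun ω => ∑ s ∈ Finset.range n, D s ω) 2 μ ∧
    ∫ ω, (∑ s ∈ Finset.range n, D s ω) ^ 2 ∂μ ≤ n * B ^ 2 := by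
  have hDL : ∀ s, MemLp (D s) 2 μ := fun s =>
    MemLp.of_bound ((hmeas s).mono (hF_le _)).aestronglyMeasurable B (by simpa using hbdd s)
  induction n with
  | zero => simp [stronglyMeasurable_const]
  | succ n ih =>
    obtain ⟨i1, i2, i3⟩ := ih
    simp only [Finset.sum_range_succ]
    refine ⟨(i1.mono (hF_mono n)).add (hmeas n), i2.add (hDL n), ?_⟩
    set M : Ω → ℝ := fun ω => ∑ s ∈ Finset.range n, D s ω with hMdef
    have hMD : Integrable (M * D n) μ := i2.integrable_mul (hDL n)
    have h0 : ∫ ω, (M * D n) ω ∂μ = 0 := by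
      rw [← integral_condExp (hF_le n)]
      have h := condExp_mul_of_stronglyMeasurable_left i1 hMD ((hDL n).integrable (by norm_num))
      rw [integral_congr_ae h]
      refine integral_eq_zero_of_ae ?_
      filter_upwards [hD n] with ω hω
      simp [hω]
    have hD2 : ∫ ω, (D n ω) ^ 2 ∂μ ≤ B ^ 2 := by
      calc ∫ ω, (D n ω) ^ 2 ∂μ ≤ ∫ _, B ^ 2 ∂μ := by
            refine integral_mono_ae (hDL n).integrable_sq (integrable_const _) ?_
            filter_upwards [hbdd n] with ω hω
            exact sq_le_sq' (abs_le.1 hω).1 (abs_le.1 hω).2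
        _ = B ^ 2 := by simp
    have hexp : ∫ ω, (M ω + D n ω) ^ 2 ∂μ
        = ∫ ω, M ω ^ 2 ∂μ + 2 * ∫ ω, (M * D n) ω ∂μ + ∫ ω, D n ω ^ 2 ∂μ := by
      rw [← integral_const_mul, ← integral_add i2.integrable_sq (hMD.const_mul 2),
        ← integral_add (f := fun ω => M ω ^ 2 + 2 * (M * D n) ω)
          (i2.integrable_sq.add (hMD.const_mul 2)) (hDL n).integrable_sq]
      refine integral_congr_ae (Eventually.of_forall fun ω => ?_)
      simp only [Pi.mul_apply]
      ring
    change ∫ ω, (M ω + D n ω) ^ 2 ∂μ ≤ _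
    rw [hexp, h0]
    push_cast
    have : ∫ ω, M ω ^ 2 ∂μ ≤ n * B ^ 2 := i3
    linarith

lemma aux_conv {Ω : Type*} [m0 : MeasurableSpace Ω]
    (μ : Measure Ω) [IsProbabilityMeasure μ] (M : ℕ → Ω → ℝ) (K : ℝ)
    (hM : ∀ n, MemLp (M n) 2 μ) (hK : ∀ n : ℕ, ∫ ω, M n ω ^ 2 ∂μ ≤ n * K) :
    ∀ᵐ ω ∂μ, ∀ ε > 0, ∀ᶠ k : ℕ in atTop, |M (k ^ 2) ω| ≤ ε * (k : ℝ) ^ 2 := by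
  set g : ℕ → Ω → ENNReal := fun k ω => ENNReal.ofReal ((M (k ^ 2) ω / (k : ℝ) ^ 2) ^ 2) with hg
  have hint : ∀ k, Integrable (fun ω => (M (k ^ 2) ω / (k : ℝ) ^ 2) ^ 2) μ := fun k => by
    simp only [div_pow]
    exact (hM _).integrable_sq.div_const _
  have hgm : ∀ k, AEMeasurable (g k) μ := fun k => (hint k).aemeasurable.ennreal_ofReal
  have hgi : ∀ k, ∫⁻ ω, g k ω ∂μ ≤ ENNReal.ofReal (K * (1 / (k : ℝ) ^ 2)) := fun k => by
    rw [← ofReal_integral_eq_lintegral_ofReal (hint k)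
      (Eventually.of_forall fun ω => sq_nonneg _)]
    refine ENNReal.ofReal_le_ofReal ?_
    simp only [div_pow]
    rw [integral_div]
    rcases Nat.eq_zero_or_pos k with rfl | hk
    · simp
    have hk' : (0 : ℝ) < k := by exact_mod_cast hk
    have := hK (k ^ 2)
    push_cast at this
    rw [div_le_iff₀ (by positivity)]
    refine this.trans (le_of_eq ?_)
    field_simp
  have hfin : ∫⁻ ω, ∑' k, g k ω ∂μ ≠ ⊤ := by
    rw [lintegral_tsum hgm]
    refine ne_top_of_le_ne_top ?_ (ENNReal.tsum_le_tsum hgi)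
    have hs : Summable fun k : ℕ => K * (1 / (k : ℝ) ^ 2) :=
      (Real.summable_one_div_nat_pow.2 (by norm_num)).mul_left K
    exact hs.tsum_ofReal_ne_top
  filter_upwards [ae_lt_top' (AEMeasurable.ennreal_tsum hgm) hfin] with ω hω ε hε
  have ht := ENNReal.tendsto_atTop_zero_of_tsum_ne_top hω.ne
  have hpos : (0 : ENNReal) < ENNReal.ofReal (ε ^ 2) := by simpa using pow_pos hε 2
  filter_upwards [ht.eventually (gt_mem_nhds hpos), eventually_gt_atTop 0] with k hk hk0
  have hk' : (0 : ℝ) < k := by exact_mod_cast hk0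
  have h1 := (ENNReal.ofReal_lt_ofReal_iff (by positivity)).1 hk
  have h2 := abs_lt_of_sq_lt_sq h1 hε.le
  rw [abs_div, abs_of_pos (show (0 : ℝ) < (k : ℝ) ^ 2 by positivity),
    div_lt_iff₀ (by positivity)] at h2
  exact h2.le

/-- **Partial sums of a bounded adapted sequence whose conditional-mean Cesàro
averages are eventually bounded below by a positive constant diverge to `+∞`
almost surely.** -/
theorem bounded_adapted_partial_sums_tendsto_atTop {Ω : Type*} [m0 : MeasurableSpace Ω]
    (μ : Measure Ω) [IsProbabilityMeasure μ]
    (F : ℕ → MeasurableSpace Ω) (hF_le : ∀ s, F s ≤ m0) (hF_mono : ∀ s, F s ≤ F (s + 1))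
    (C : ℝ) (hC : 0 ≤ C) (X : ℕ → Ω → ℝ)
    (hmeas : ∀ s, Measurable[F (s + 1)] (X s))
    (hbdd : ∀ s ω, |X s ω| ≤ C)
    (κ : ℝ) (hκ : 0 < κ)
    (hliminf : ∀ᵐ ω ∂μ,
      κ ≤ atTop.liminf fun T : ℕ =>
        (1 / (T : ℝ)) * ∑ s ∈ Finset.range T, (μ[X s | F s]) ω) :
    ∀ᵐ ω ∂μ,
      Tendsto (fun T : ℕ => ∑ s ∈ Finset.range T, X s ω) atTop atTop := by
  have hXm : ∀ s, StronglyMeasurable (X s) := fun s =>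
    ((hmeas s).mono (hF_le _) le_rfl).stronglyMeasurable
  have hXi : ∀ s, Integrable (X s) μ := fun s =>
    Integrable.of_bound (hXm s).aestronglyMeasurable C (Eventually.of_forall (hbdd s))
  have hce : ∀ s, ∀ᵐ ω ∂μ, |(μ[X s | F s]) ω| ≤ C := fun s => by
    have := ae_bdd_condExp_of_ae_bdd (m := F s) (μ := μ) (R := ⟨C, hC⟩) (f := X s)
      (Eventually.of_forall (hbdd s))
    exact this
  set D : ℕ → Ω → ℝ := fun s ω => X s ω - (μ[X s | F s]) ω with hDdef
  have hDb : ∀ s, ∀ᵐ ω ∂μ, |D s ω| ≤ 2 * C := fun s => by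
    filter_upwards [hce s] with ω hω
    have := (abs_sub (X s ω) ((μ[X s | F s]) ω)).trans (add_le_add (hbdd s ω) hω)
    simp only [hDdef]; linarith
  have hDm : ∀ s, StronglyMeasurable[F (s + 1)] (D s) := fun s =>
    (hmeas s).stronglyMeasurable.sub (stronglyMeasurable_condExp.mono (hF_mono s))
  have hD0 : ∀ s, μ[D s | F s] =ᵐ[μ] 0 := fun s => by
    have h := condExp_sub (hXi s) (integrable_condExp (m := F s) (f := X s) (μ := μ)) (F s)
    refine h.trans ?_
    rw [condExp_of_stronglyMeasurable (hF_le s) stronglyMeasurable_condExp integrable_condExp]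
    simp
  have hsq := aux_sq μ F hF_le hF_mono (2 * C) (by positivity) D hDm hDb hD0
  have hconv := aux_conv μ (fun n ω => ∑ s ∈ Finset.range n, D s ω) ((2 * C) ^ 2)
    (fun n => (hsq n).2.1) (fun n => (hsq n).2.2)
  filter_upwards [hliminf, hconv, ae_all_iff.2 hDb, ae_all_iff.2 hce] with ω h1 h2 h3 h4
  refine aux_det (fun s => X s ω) (fun s => (μ[X s | F s]) ω) C κ hκ h3 ?_
    (h2 (κ / 8) (by positivity))
  have hb : IsBoundedUnder (· ≥ ·) atTop fun T : ℕ =>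
      (1 / (T : ℝ)) * ∑ s ∈ Finset.range T, (μ[X s | F s]) ω := by
    refine isBoundedUnder_of_eventually_ge (a := -C) ?_
    filter_upwards [eventually_gt_atTop 0] with T hT
    have hT' : (0 : ℝ) < T := by exact_mod_cast hT
    have hs : (T : ℝ) * (-C) ≤ ∑ s ∈ Finset.range T, (μ[X s | F s]) ω := by
      have := Finset.card_nsmul_le_sum (Finset.range T) (fun s => (μ[X s | F s]) ω) (-C)
        (fun s _ => (abs_le.1 (h4 s)).1)
      simpa using this
    rw [one_div, inv_mul_eq_div, le_div_iff₀ hT']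
    linarith
  have hlt := eventually_lt_of_lt_liminf (show κ / 2 < _ by linarith) hb
  filter_upwards [hlt, eventually_gt_atTop 0] with T hT hT0
  have hT' : (0 : ℝ) < T := by exact_mod_cast hT0
  rw [one_div, inv_mul_eq_div, lt_div_iff₀ hT'] at hT
  exact hT.le
end

section
/- Let A be a nonempty finite type, equip A with the discrete σ-algebra and ℕ → A with the product σ-algebra. For probability measures μ, ν on ℕ → A define the weak distance d(μ,ν) := ∑_{t=1}^{∞} 2^{−t} · sup{ |μ E − ν E| : E measurable with respect to the σ-algebra generated by the coordinate projections z ↦ z s for s < t }. Fix λ ∈ (0,1) and u : A → ℝ with 0 ≤ u a ≤ 1 for all a ∈ A, and define the normalized discounted payoff U(μ) := ∫ (1−λ) ∑_{t=0}^{∞} λ^t · u(z t) dμ(z). Then for every δ > 0 there exists ρ > 0 such that for all probability measures μ, ν on ℕ → A: d(μ,ν) ≤ ρ implies |U(μ) − U(ν)| ≤ δ. (Continuity of the normalized discounted payoff with respect to the weak distance on play-path distributions.) -/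
open MeasureTheory Filter

/-- The σ-algebra on play paths `ℕ → A` generated by the coordinate projections
`z ↦ z s` for `s < t`. -/
def cylinderAlg (A : Type*) [MeasurableSpace A] (t : ℕ) : MeasurableSpace (ℕ → A) :=
  ⨆ s ∈ Finset.range t, MeasurableSpace.comap (fun z : ℕ → A => z s) inferInstance

/-- The weak distance between two play-path distributions:
`d(μ,ν) := ∑_{t=1}^∞ 2^{-t} ⋅ sup { |μ E - ν E| : E ∈ 𝓑^t }`, where `𝓑^t` is the
σ-algebra generated by the first `t` coordinate projections. -/
noncomputable def weakDist {A : Type*} [MeasurableSpace A]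
    (μ ν : Measure (ℕ → A)) : ℝ :=
  ∑' t : ℕ, (2 : ℝ)⁻¹ ^ (t + 1) *
    ⨆ E : {E : Set (ℕ → A) // MeasurableSet[cylinderAlg A (t + 1)] E},
      |(μ E.1).toReal - (ν E.1).toReal|

theorem aux_coord {A : Type*} [Fintype A] [MeasurableSpace A] [MeasurableSingletonClass A]
    (u : A → ℝ) (μ : Measure (ℕ → A)) [IsProbabilityMeasure μ] (t : ℕ) :
    ∫ z, u (z t) ∂μ = ∑ a, u a * (μ ((fun z : ℕ → A => z t) ⁻¹' {a})).toReal := by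
  have h := integral_map (μ := μ) (φ := fun z : ℕ → A => z t) (measurable_pi_apply t).aemeasurable
    (f := u) (measurable_of_finite u).aestronglyMeasurable
  have : IsProbabilityMeasure (μ.map (fun z : ℕ → A => z t)) :=
    Measure.isProbabilityMeasure_map (measurable_pi_apply t).aemeasurable
  rw [← h, integral_fintype Integrable.of_finite]
  refine Finset.sum_congr rfl fun a _ => ?_
  rw [measureReal_def, Measure.map_apply (measurable_pi_apply t) (measurableSet_singleton a),
    smul_eq_mul, mul_comm]

theorem aux_abs {Ω : Type*} [MeasurableSpace Ω] (μ ν : Measure Ω) [IsProbabilityMeasure μ]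
    [IsProbabilityMeasure ν] (E : Set Ω) : |(μ E).toReal - (ν E).toReal| ≤ 1 := by
  have h1 : (μ E).toReal ≤ 1 := measureReal_le_one
  have h2 : (ν E).toReal ≤ 1 := measureReal_le_one
  have h3 : 0 ≤ (μ E).toReal := ENNReal.toReal_nonneg
  have h4 : 0 ≤ (ν E).toReal := ENNReal.toReal_nonneg
  rw [abs_le]; constructor <;> linarith

theorem aux_weak {A : Type*} [MeasurableSpace A]
    (μ ν : Measure (ℕ → A)) [IsProbabilityMeasure μ] [IsProbabilityMeasure ν] (t : ℕ)
    (E : Set (ℕ → A)) (hE : MeasurableSet[cylinderAlg A (t + 1)] E) :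
    |(μ E).toReal - (ν E).toReal| ≤ 2 ^ (t + 1) * weakDist μ ν := by
  let D : ℕ → ℝ := fun t => ⨆ E : {E : Set (ℕ → A) // MeasurableSet[cylinderAlg A (t + 1)] E},
      |(μ E.1).toReal - (ν E.1).toReal|
  have hD0 : ∀ t, 0 ≤ D t := fun t => Real.iSup_nonneg fun _ => abs_nonneg _
  have hD1 : ∀ t, D t ≤ 1 := fun t => Real.iSup_le (fun E => aux_abs μ ν E.1) zero_le_one
  have hED : |(μ E).toReal - (ν E).toReal| ≤ D t :=
    le_ciSup (f := fun E : {E : Set (ℕ → A) // MeasurableSet[cylinderAlg A (t + 1)] E} =>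
      |(μ E.1).toReal - (ν E.1).toReal|) ⟨1, by rintro _ ⟨E, rfl⟩; exact aux_abs μ ν E.1⟩ ⟨E, hE⟩
  have hg : Summable fun t : ℕ => (2 : ℝ)⁻¹ ^ (t + 1) :=
    (summable_nat_add_iff 1).2 (summable_geometric_of_lt_one (by norm_num) (by norm_num))
  have hs : Summable fun t : ℕ => (2 : ℝ)⁻¹ ^ (t + 1) * D t :=
    Summable.of_nonneg_of_le (fun t => mul_nonneg (by positivity) (hD0 t))
      (fun t => mul_le_of_le_one_right (by positivity) (hD1 t)) hg
  have hle : (2 : ℝ)⁻¹ ^ (t + 1) * D t ≤ weakDist μ ν :=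
    hs.le_tsum t (fun j _ => mul_nonneg (by positivity) (hD0 j))
  calc _ ≤ D t := hED
    _ = 2 ^ (t + 1) * ((2 : ℝ)⁻¹ ^ (t + 1) * D t) := by
      rw [← mul_assoc, ← mul_pow]; norm_num
    _ ≤ _ := by gcongr

theorem aux_cyl {A : Type*} [MeasurableSpace A] [MeasurableSingletonClass A] (t : ℕ) (a : A) :
    MeasurableSet[cylinderAlg A (t + 1)] ((fun z : ℕ → A => z t) ⁻¹' {a}) := by
  have h : MeasurableSpace.comap (fun z : ℕ → A => z t) inferInstance ≤ cylinderAlg A (t + 1) :=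
    le_iSup₂_of_le (f := fun s (_ : s ∈ Finset.range (t + 1)) =>
      MeasurableSpace.comap (fun z : ℕ → A => z s) inferInstance) t (by simp) le_rfl
  exact h _ ⟨{a}, measurableSet_singleton a, rfl⟩

theorem aux_int {A : Type*} [Fintype A] [MeasurableSpace A] [MeasurableSingletonClass A]
    (L : ℝ) (hL : L ∈ Set.Ioo (0 : ℝ) 1)
    (u : A → ℝ) (hu : ∀ a, u a ∈ Set.Icc (0 : ℝ) 1)
    (μ : Measure (ℕ → A)) [IsProbabilityMeasure μ] :
    (∀ t, ∫ z, u (z t) ∂μ ∈ Set.Icc (0 : ℝ) 1) ∧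
    HasSum (fun t => L ^ t * ∫ z, u (z t) ∂μ) (∫ z, ∑' t : ℕ, L ^ t * u (z t) ∂μ) := by
  have hm : ∀ t, Measurable fun z : ℕ → A => u (z t) := fun t =>
    (measurable_of_finite u).comp (measurable_pi_apply t)
  have hi : ∀ t, Integrable (fun z : ℕ → A => u (z t)) μ := fun t =>
    Integrable.of_bound (hm t).aestronglyMeasurable 1 (Eventually.of_forall fun z => by
      rw [Real.norm_eq_abs, abs_of_nonneg (hu _).1]; exact (hu _).2)
  have hI : ∀ t, ∫ z, u (z t) ∂μ ∈ Set.Icc (0 : ℝ) 1 := fun t => by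
    refine ⟨integral_nonneg fun z => (hu _).1, ?_⟩
    have := integral_mono (hi t) (integrable_const (1 : ℝ)) (fun z => (hu (z t)).2)
    simpa using this
  refine ⟨hI, ?_⟩
  have h := hasSum_integral_of_summable_integral_norm (μ := μ)
    (F := fun (t : ℕ) (z : ℕ → A) => L ^ t * u (z t)) (fun t => (hi t).const_mul _) ?_
  · simpa only [integral_const_mul] using h
  · have : ∀ t (z : ℕ → A), ‖L ^ t * u (z t)‖ = L ^ t * u (z t) := fun t z => by
      rw [Real.norm_eq_abs, abs_of_nonneg (mul_nonneg (pow_nonneg hL.1.le t) (hu _).1)]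
    simp only [this, integral_const_mul]
    exact Summable.of_nonneg_of_le (fun t => mul_nonneg (pow_nonneg hL.1.le t) (hI t).1)
      (fun t => mul_le_of_le_one_right (pow_nonneg hL.1.le t) (hI t).2)
      (summable_geometric_of_lt_one hL.1.le hL.2)

/-- **Continuity of the normalized discounted payoff with respect to the weak
distance on play-path distributions.** -/
theorem discounted_payoff_continuous_in_weakDist {A : Type*}
    [Fintype A] [Nonempty A] [MeasurableSpace A] [MeasurableSingletonClass A]
    (L : ℝ) (hL : L ∈ Set.Ioo (0 : ℝ) 1)
    (u : A → ℝ) (hu : ∀ a, u a ∈ Set.Icc (0 : ℝ) 1) :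
    ∀ δ > (0 : ℝ), ∃ ρ > (0 : ℝ),
      ∀ μ ν : Measure (ℕ → A), IsProbabilityMeasure μ → IsProbabilityMeasure ν →
        weakDist μ ν ≤ ρ →
        |(∫ z, (1 - L) * ∑' t : ℕ, L ^ t * u (z t) ∂μ) -
            (∫ z, (1 - L) * ∑' t : ℕ, L ^ t * u (z t) ∂ν)| ≤ δ := by
  intro δ hδ
  obtain ⟨hL0, hL1⟩ := hL
  obtain ⟨N, hN⟩ := exists_pow_lt_of_lt_one (half_pos hδ) hL1
  have hc : (0 : ℝ) < Fintype.card A := by exact_mod_cast Fintype.card_pos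
  refine ⟨δ / 2 / (Fintype.card A * 2 ^ N), by positivity, ?_⟩
  intro μ ν hμ hν hd
  obtain ⟨hIμ, hSμ⟩ := aux_int L ⟨hL0, hL1⟩ u hu μ
  obtain ⟨hIν, hSν⟩ := aux_int L ⟨hL0, hL1⟩ u hu ν
  rw [integral_const_mul, integral_const_mul, ← mul_sub, abs_mul,
    abs_of_pos (sub_pos.2 hL1)]
  have hS := hSμ.sub hSν
  set S := (∫ z, ∑' t : ℕ, L ^ t * u (z t) ∂μ) - ∫ z, ∑' t : ℕ, L ^ t * u (z t) ∂ν
  have hsmall : ∀ t < N, |∫ z, u (z t) ∂μ - ∫ z, u (z t) ∂ν| ≤ δ / 2 := by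
    intro t ht
    rw [aux_coord, aux_coord, ← Finset.sum_sub_distrib]
    calc _ ≤ ∑ a : A, (2 : ℝ) ^ N * (δ / 2 / (Fintype.card A * 2 ^ N)) := by
          refine (Finset.abs_sum_le_sum_abs _ _).trans (Finset.sum_le_sum fun a _ => ?_)
          rw [← mul_sub, abs_mul, abs_of_nonneg (hu a).1]
          refine (mul_le_of_le_one_left (abs_nonneg _) (hu a).2).trans ?_
          refine (aux_weak μ ν t _ (aux_cyl t a)).trans ?_
          calc _ ≤ (2 : ℝ) ^ (t + 1) * (δ / 2 / (Fintype.card A * 2 ^ N)) := by gcongr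
            _ ≤ _ := by
              gcongr
              · norm_num
              · omega
      _ = δ / 2 := by
          rw [Finset.sum_const, Finset.card_univ, nsmul_eq_mul]; field_simp
  have hg := hasSum_geometric_of_lt_one hL0.le hL1
  have hB : HasSum (fun t => L ^ t * (δ / 2) + if t < N then 0 else L ^ t)
      ((1 - L)⁻¹ * (δ / 2) + L ^ N * (1 - L)⁻¹) := by
    refine (hg.mul_right _).add ?_
    rw [← hasSum_nat_add_iff' N]
    have : ∑ i ∈ Finset.range N, (if i < N then (0 : ℝ) else L ^ i) = 0 :=
      Finset.sum_eq_zero fun i hi => if_pos (Finset.mem_range.1 hi)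
    rw [this, sub_zero]
    have he : (fun i => if i + N < N then (0 : ℝ) else L ^ (i + N)) = fun i => L ^ N * L ^ i := by
      funext i
      rw [if_neg (by omega), pow_add, mul_comm]
    rw [he]
    exact hg.mul_left (L ^ N)
  have hterm : ∀ t, |L ^ t * ∫ z, u (z t) ∂μ - L ^ t * ∫ z, u (z t) ∂ν| ≤
      L ^ t * (δ / 2) + if t < N then 0 else L ^ t := by
    intro t
    have hp : 0 < L ^ t := pow_pos hL0 t
    rw [← mul_sub, abs_mul, abs_of_pos hp]
    split_ifs with h
    · rw [add_zero]; exact mul_le_mul_of_nonneg_left (hsmall t h) hp.le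
    · have : |∫ z, u (z t) ∂μ - ∫ z, u (z t) ∂ν| ≤ 1 := by
        have h1 := hIμ t
        have h2 := hIν t
        rw [abs_le]; constructor <;> linarith [h1.1, h1.2, h2.1, h2.2]
      nlinarith
  have hfin : |S| ≤ (1 - L)⁻¹ * (δ / 2) + L ^ N * (1 - L)⁻¹ := by
    rw [abs_le]
    exact ⟨hasSum_le (fun t => (abs_le.1 (hterm t)).1) hB.neg hS,
      hasSum_le (fun t => (abs_le.1 (hterm t)).2) hS hB⟩
  have h1L : 0 < 1 - L := sub_pos.2 hL1
  calc (1 - L) * |S| ≤ (1 - L) * ((1 - L)⁻¹ * (δ / 2) + L ^ N * (1 - L)⁻¹) := by gcongr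
    _ = δ / 2 + L ^ N := by field_simp
    _ ≤ δ := by linarith
end

section
/- In the finite-horizon repeated game setting [see context], let ψ ≥ 0 and suppose the T-horizon strategy profile f is a finite-horizon weak ψ-subjective 0-equilibrium. Then there exists a T-horizon strategy profile f̂ such that: (i) f̂ is a ψ-Nash equilibrium of the T-period game, i.e. for every player i and every T-horizon strategy g_i of player i, U_i^T(f̂) ≥ U_i^T(g_i, f̂_{−i}) − ψ; and (ii) the induced distributions on A^T coincide: μ^{f̂}(w) = μ^f(w) for every w ∈ A^T. (Finite-horizon purification: a weak ψ-subjective 0-equilibrium can be patched into an exact ψ-Nash equilibrium of the T-period game without changing the distribution of play.) -/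
open scoped BigOperators

section FiniteHorizon

variable {I : Type*} [Fintype I] [DecidableEq I] [Nonempty I]
variable {A : I → Type*} [∀ i, Fintype (A i)] [∀ i, Nonempty (A i)]

/-- A (behavior) strategy profile: each player `i` assigns to every history
(a list of joint actions) a probability vector on its own action set. -/
abbrev Profile (I : Type*) (A : I → Type*) : Type _ :=
  ∀ i, List (∀ j, A j) → A i → ℝ

/-- Every prescription of the profile is a probability vector. -/
def IsProfile (f : Profile I A) : Prop :=
  ∀ i h, IsProbVec (f i h)

/-- The history consisting of the first `t` joint actions of `w`. -/
def histPrefix {T : ℕ} (w : Fin T → ∀ j, A j) (t : Fin T) : List (∀ j, A j) :=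
  List.ofFn fun s : Fin t.1 => w (Fin.castLE t.isLt.le s)

/-- The probability that the profile `f` generates the length-`T` play path `w`. -/
def pathProb (T : ℕ) (f : Profile I A) (w : Fin T → ∀ j, A j) : ℝ :=
  ∏ t : Fin T, ∏ i, f i (histPrefix w t) (w t i)

/-- The `T`-period (normalized) discounted payoff of player `i` under profile `f`. -/
def UT (T : ℕ) (u : ∀ i : I, (∀ j, A j) → ℝ) (lam : I → ℝ) (i : I) (f : Profile I A) : ℝ :=
  ∑ w : Fin T → ∀ j, A j,
    pathProb T f w * ((1 - lam i) * ∑ t : Fin T, lam i ^ (t : ℕ) * u i (w t))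

/-- An event `E ⊆ A^T` depends only on the first `t` coordinates. -/
def DependsOnFirst (T t : ℕ) (E : Set (Fin T → ∀ j, A j)) : Prop :=
  ∀ w w', (∀ s : Fin T, (s : ℕ) < t → w s = w' s) → (w ∈ E ↔ w' ∈ E)

/-- The truncated weak distance between two distributions on `A^T`:
`d_T(P,Q) := ∑_{t=1}^T 2^{-t} ⋅ max { |P(E) - Q(E)| : E depends only on the first
`t` coordinates }`. -/
noncomputable def dT (T : ℕ) (P Q : (Fin T → ∀ j, A j) → ℝ) : ℝ :=
  ∑ t ∈ Finset.range T, (2 : ℝ)⁻¹ ^ (t + 1) *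
    ⨆ E : {E : Set (Fin T → ∀ j, A j) // DependsOnFirst T (t + 1) E},
      |(∑ w, E.1.indicator P w) - ∑ w, E.1.indicator Q w|

/-- `f` is a `ψ`-Nash equilibrium of the `T`-period game. -/
def IsNashT (T : ℕ) (u : ∀ i : I, (∀ j, A j) → ℝ) (lam : I → ℝ) (ψ : ℝ)
    (f : Profile I A) : Prop :=
  ∀ i (g : List (∀ j, A j) → A i → ℝ), (∀ h, IsProbVec (g h)) →
    UT T u lam i f ≥ UT T u lam i (Function.update f i g) - ψ

/-- `f` is a finite-horizon weak `ψ`-subjective `η`-equilibrium. -/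
def IsWeakSubjT (T : ℕ) (u : ∀ i : I, (∀ j, A j) → ℝ) (lam : I → ℝ) (ψ η : ℝ)
    (f : Profile I A) : Prop :=
  ∀ i, ∃ f' : Profile I A, IsProfile f' ∧ f' i = f i ∧
    UT T u lam i f' ≥
      (⨆ g : {g : List (∀ j, A j) → A i → ℝ // ∀ h, IsProbVec (g h)},
        UT T u lam i (Function.update f' i g.1)) - ψ ∧
    dT T (pathProb T f') (pathProb T f) ≤ η

/-- Player `i` alone is responsible for the first exit of `h` from the support of `f`. -/
def Solo (f : Profile I A) (i : I) (h : List (∀ j, A j)) : Prop :=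
  ∃ (n : ℕ) (v : Fin n → ∀ j, A j), h = List.ofFn v ∧ ∃ k : Fin n,
    (∀ m < k, ∀ j, f j (histPrefix v m) (v m j) ≠ 0) ∧
    f i (histPrefix v k) (v k i) = 0 ∧
    ∀ j, j ≠ i → f j (histPrefix v k) (v k j) ≠ 0

theorem Solo.unique {f : Profile I A} {i i' : I} {h : List (∀ j, A j)}
    (h1 : Solo f i h) (h2 : Solo f i' h) : i = i' := by
  obtain ⟨n, v, rfl, k, a1, a2, a3⟩ := h1
  obtain ⟨n', v', e, k', b1, b2, b3⟩ := h2
  rw [List.ofFn_inj'] at e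
  cases e
  rcases lt_trichotomy k k' with hk | hk | hk
  · exact absurd a2 (b1 k hk i)
  · subst hk
    by_contra hne
    exact b3 i hne a2
  · exact absurd b2 (a1 k' hk i')

/-- truncation of a path -/
def truncP {T : ℕ} (w : Fin T → ∀ j, A j) (t : ℕ) (ht : t ≤ T) : Fin t → ∀ j, A j :=
  fun s => w (Fin.castLE ht s)

theorem pathProb_snoc (n : ℕ) (f : Profile I A) (w : Fin n → ∀ j, A j) (a : ∀ j, A j) :
    pathProb (n + 1) f (Fin.snoc (α := fun _ => ∀ j, A j) w a) =
      pathProb n f w * ∏ i, f i (List.ofFn w) (a i) := by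
  unfold pathProb
  rw [Fin.prod_univ_castSucc]
  congr 1
  · refine Finset.prod_congr rfl fun t _ => Finset.prod_congr rfl fun i _ => ?_
    rw [Fin.snoc_castSucc]
    have e : histPrefix (Fin.snoc (α := fun _ => ∀ j, A j) w a) t.castSucc = histPrefix w t := by
      refine congrArg (List.ofFn (n := t.1)) ?_
      funext s
      exact Fin.snoc_castSucc (α := fun _ => ∀ j, A j) a w (Fin.castLE t.isLt.le s)
    rw [e]
  · refine Finset.prod_congr rfl fun i _ => ?_
    rw [Fin.snoc_last]
    have e : histPrefix (Fin.snoc (α := fun _ => ∀ j, A j) w a) (Fin.last n) = List.ofFn w := by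
      refine congrArg (List.ofFn (n := n)) ?_
      funext s
      exact Fin.snoc_castSucc (α := fun _ => ∀ j, A j) a w s
    rw [e]

theorem sum_prod_one {p : ∀ i, A i → ℝ} (hp : ∀ i, IsProbVec (p i)) :
    ∑ a : ∀ j, A j, ∏ i, p i (a i) = 1 := by
  have h := Finset.prod_univ_sum (fun i => (Finset.univ : Finset (A i))) p
  rw [Fintype.piFinset_univ] at h
  rw [← h]
  exact Finset.prod_eq_one fun i _ => (hp i).2

theorem marg_eq {p q : ∀ i, A i → ℝ} (hp : ∀ i, IsProbVec (p i)) (hq : ∀ i, IsProbVec (q i))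
    (h : ∀ a : ∀ j, A j, ∏ i, p i (a i) = ∏ i, q i (a i)) (j : I) (b : A j) :
    p j b = q j b := by
  classical
  have key : ∀ r : ∀ i, A i → ℝ, (∀ i, IsProbVec (r i)) →
      r j b = ∑ a : ∀ j, A j, if a j = b then ∏ i, r i (a i) else 0 := by
    intro r hr
    have h := Finset.prod_univ_sum (fun i => (Finset.univ : Finset (A i)))
      (Function.update r j (Pi.single b (r j b)))
    rw [Fintype.piFinset_univ] at h
    have h2 : ∏ i, ∑ x, Function.update r j (Pi.single b (r j b)) i x = r j b := by
      rw [Finset.prod_eq_single j]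
      · simp
      · intro k _ hk
        rw [Function.update_of_ne hk]
        exact (hr k).2
      · simp
    rw [← h2, h]
    refine Finset.sum_congr rfl fun a _ => ?_
    split_ifs with hab
    · refine Finset.prod_congr rfl fun k _ => ?_
      by_cases hk : k = j
      · subst hk
        simp [hab]
      · rw [Function.update_of_ne hk]
    · refine Finset.prod_eq_zero (Finset.mem_univ j) ?_
      simp [hab]
  rw [key p hp, key q hq]
  exact Finset.sum_congr rfl fun a _ => by rw [h a]

theorem pathProb_down {n : ℕ} {f g : Profile I A} (hf : IsProfile f) (hg : IsProfile g)
    (h : ∀ w, pathProb (n + 1) f w = pathProb (n + 1) g w) (w) :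
    pathProb n f w = pathProb n g w := by
  have key : ∀ r : Profile I A, IsProfile r → pathProb n r w =
      ∑ a, pathProb (n + 1) r (Fin.snoc (α := fun _ => ∀ j, A j) w a) := by
    intro r hr
    simp_rw [pathProb_snoc]
    rw [← Finset.mul_sum, sum_prod_one (fun i => hr i _), mul_one]
  rw [key f hf, key g hg]
  exact Finset.sum_congr rfl fun a _ => h _

theorem pathProb_le {T : ℕ} {f g : Profile I A} (hf : IsProfile f) (hg : IsProfile g)
    (h : ∀ w, pathProb T f w = pathProb T g w) {n : ℕ} (hn : n ≤ T) :
    ∀ w, pathProb n f w = pathProb n g w := by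
  induction hn using Nat.decreasingInduction with
  | self => exact h
  | of_succ k hk ih => exact pathProb_down hf hg ih

theorem onpath_eq {T : ℕ} {f g : Profile I A} (hf : IsProfile f) (hg : IsProfile g)
    (h : ∀ w, pathProb T f w = pathProb T g w) (w : Fin T → ∀ j, A j) (t : Fin T)
    (hw : ∀ s < t, ∀ j, f j (histPrefix w s) (w s j) ≠ 0) (j : I) :
    g j (histPrefix w t) = f j (histPrefix w t) := by
  funext b
  have h0 := pathProb_le hf hg h t.isLt.le (truncP w t t.isLt.le)
  have hne : pathProb t f (truncP w t t.isLt.le) ≠ 0 := by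
    refine Finset.prod_ne_zero_iff.2 fun s _ => Finset.prod_ne_zero_iff.2 fun i _ => ?_
    exact hw (Fin.castLE t.isLt.le s) s.2 i
  refine (marg_eq (p := fun i => f i (histPrefix w t)) (q := fun i => g i (histPrefix w t))
    (fun i => hf i _) (fun i => hg i _) ?_ j b).symm
  intro a
  have h1 := pathProb_le hf hg h (Nat.succ_le_of_lt t.isLt)
    (Fin.snoc (α := fun _ => ∀ j, A j) (truncP w t t.isLt.le) a)
  rw [pathProb_snoc, pathProb_snoc, ← h0] at h1
  exact mul_left_cancel₀ hne h1

theorem eq_of_dT {T : ℕ} (hT : 1 ≤ T) {P Q : (Fin T → ∀ j, A j) → ℝ} (h : dT T P Q ≤ 0) (w) :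
    P w = Q w := by
  classical
  unfold dT at h
  have hnn : ∀ t ∈ Finset.range T, 0 ≤ (2 : ℝ)⁻¹ ^ (t + 1) *
    ⨆ E : {E : Set (Fin T → ∀ j, A j) // DependsOnFirst T (t + 1) E},
      |(∑ w, E.1.indicator P w) - ∑ w, E.1.indicator Q w| := fun t _ =>
    mul_nonneg (by positivity) (Real.iSup_nonneg fun _ => abs_nonneg _)
  have h1 := (Finset.single_le_sum hnn (Finset.mem_range.2 (show T - 1 < T by omega))).trans h
  have h2 : (⨆ E : {E : Set (Fin T → ∀ j, A j) // DependsOnFirst T (T - 1 + 1) E},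
      |(∑ w, E.1.indicator P w) - ∑ w, E.1.indicator Q w|) ≤ 0 :=
    nonpos_of_mul_nonpos_right h1 (by positivity)
  have hE : DependsOnFirst T (T - 1 + 1) ({w} : Set (Fin T → ∀ j, A j)) := by
    intro x y hxy
    have : x = y := funext fun s => hxy s (by omega)
    rw [this]
  have h3 := (le_ciSup (f := fun E : {E : Set (Fin T → ∀ j, A j) //
      DependsOnFirst T (T - 1 + 1) E} =>
      |(∑ w, E.1.indicator P w) - ∑ w, E.1.indicator Q w|)
      (Set.finite_range _).bddAbove ⟨{w}, hE⟩).trans h2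
  have key : ∀ R : (Fin T → ∀ j, A j) → ℝ,
      ∑ x, ({w} : Set (Fin T → ∀ j, A j)).indicator R x = R w := by
    intro R
    rw [Finset.sum_eq_single w]
    · simp
    · intro b _ hb
      simp [hb]
    · simp
  simp only [key] at h3
  exact sub_eq_zero.1 (abs_nonpos_iff.1 h3)

theorem IsProbVec.le_one {S : Type*} [Fintype S] {p : S → ℝ} (hp : IsProbVec p) (s : S) :
    p s ≤ 1 := by
  rw [← hp.2]
  exact Finset.single_le_sum (fun s _ => hp.1 s) (Finset.mem_univ s)

theorem UT_bdd (T : ℕ) (u : ∀ i : I, (∀ j, A j) → ℝ) (lam : I → ℝ) (i : I) (f : Profile I A)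
    (hf : IsProfile f) : UT T u lam i f ≤
      ∑ w : Fin T → ∀ j, A j, |(1 - lam i) * ∑ t : Fin T, lam i ^ (t : ℕ) * u i (w t)| := by
  refine Finset.sum_le_sum fun w _ => ?_
  have h0 : 0 ≤ pathProb T f w :=
    Finset.prod_nonneg fun t _ => Finset.prod_nonneg fun i _ => (hf i _).1 _
  have h1 : pathProb T f w ≤ 1 :=
    Finset.prod_le_one (fun t _ => Finset.prod_nonneg fun i _ => (hf i _).1 _)
      fun t _ => Finset.prod_le_one (fun i _ => (hf i _).1 _) fun i _ => (hf i _).le_one _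
  calc _ ≤ pathProb T f w * |(1 - lam i) * ∑ t : Fin T, lam i ^ (t : ℕ) * u i (w t)| :=
        mul_le_mul_of_nonneg_left (le_abs_self _) h0
    _ ≤ _ := mul_le_of_le_one_left (abs_nonneg _) h1

theorem IsProfile.upd {f : Profile I A} (hf : IsProfile f) (i : I)
    {g : List (∀ j, A j) → A i → ℝ} (hg : ∀ h, IsProbVec (g h)) :
    IsProfile (Function.update f i g) := by
  intro k h
  by_cases hk : k = i
  · subst hk
    simpa using hg h
  · rw [Function.update_of_ne hk]
    exact hf k h

open Classical in
/-- The patched profile. -/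
noncomputable def patch (f : Profile I A) (F : I → Profile I A) : Profile I A :=
  fun j h => if hh : ∃ i, i ≠ j ∧ Solo f i h then F hh.choose j h else f j h

theorem patch_isProfile {f : Profile I A} (hf : IsProfile f) {F : I → Profile I A}
    (hF : ∀ i, IsProfile (F i)) : IsProfile (patch f F) := by
  intro j h
  unfold patch
  split_ifs with hh
  · exact hF _ j h
  · exact hf j h

theorem patch_solo {f : Profile I A} {F : I → Profile I A} {i j : I} (hij : j ≠ i)
    {h : List (∀ j, A j)} (hs : Solo f i h) : patch f F j h = F i j h := by
  unfold patch
  have hh : ∃ i, i ≠ j ∧ Solo f i h := ⟨i, hij.symm, hs⟩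
  rw [dif_pos hh, hh.choose_spec.2.unique hs]

theorem patch_onpath {f : Profile I A} {F : I → Profile I A} {T : ℕ}
    (w : Fin T → ∀ j, A j) (t : Fin T)
    (hw : ∀ s < t, ∀ j, f j (histPrefix w s) (w s j) ≠ 0) (j : I) :
    patch f F j (histPrefix w t) = f j (histPrefix w t) := by
  unfold patch
  rw [dif_neg]
  rintro ⟨i, -, n, v, e, k, -, h2, -⟩
  unfold histPrefix at e
  rw [List.ofFn_inj'] at e
  obtain ⟨rfl, e⟩ := Sigma.mk.inj_iff.1 e
  have e := eq_of_heq e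
  subst e
  exact hw (Fin.castLE t.isLt.le k) k.2 i h2

theorem solo_later {f : Profile I A} {T : ℕ} (w : Fin T → ∀ j, A j) (t t0 : Fin T) (ht : t0 < t)
    (i : I) (hw : ∀ s < t0, ∀ j, f j (histPrefix w s) (w s j) ≠ 0)
    (h0 : f i (histPrefix w t0) (w t0 i) = 0)
    (h1 : ∀ j, j ≠ i → f j (histPrefix w t0) (w t0 j) ≠ 0) : Solo f i (histPrefix w t) :=
  ⟨t, truncP w t t.isLt.le, rfl, ⟨t0, ht⟩,
    fun m hm j => hw (Fin.castLE t.isLt.le m) hm j, h0, h1⟩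

theorem exists_first {f : Profile I A} {T : ℕ} (w : Fin T → ∀ j, A j) :
    (∀ t j, f j (histPrefix w t) (w t j) ≠ 0) ∨
    ∃ t0, (∀ s < t0, ∀ j, f j (histPrefix w s) (w s j) ≠ 0) ∧
      ∃ j, f j (histPrefix w t0) (w t0 j) = 0 := by
  by_cases h : ∃ t j, f j (histPrefix w t) (w t j) = 0
  · right
    obtain ⟨t0, h0, hmin⟩ := WellFounded.has_min (wellFounded_lt (α := Fin T))
      {t | ∃ j, f j (histPrefix w t) (w t j) = 0} h
    exact ⟨t0, fun s hs j hj => hmin s ⟨j, hj⟩ hs, h0⟩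
  · left
    intro t j hj
    exact h ⟨t, j, hj⟩

theorem patch_pathProb {f : Profile I A} {F : I → Profile I A} {T : ℕ}
    (w : Fin T → ∀ j, A j) : pathProb T (patch f F) w = pathProb T f w := by
  rcases exists_first (f := f) w with h | ⟨t0, h, j, hj⟩
  · refine Finset.prod_congr rfl fun t _ => Finset.prod_congr rfl fun i _ => ?_
    rw [patch_onpath w t (fun s _ => h s)]
  · unfold pathProb
    have hj' : patch f F j (histPrefix w t0) (w t0 j) = 0 := by
      rw [patch_onpath w t0 h, hj]
    exact (Finset.prod_eq_zero (Finset.mem_univ t0)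
      (Finset.prod_eq_zero (Finset.mem_univ j) hj')).trans
      (Finset.prod_eq_zero (Finset.mem_univ t0)
      (Finset.prod_eq_zero (Finset.mem_univ j) hj)).symm

theorem patch_dev {f : Profile I A} (hf : IsProfile f) {F : I → Profile I A}
    (hF : ∀ i, IsProfile (F i)) {T : ℕ}
    (heq : ∀ i w, pathProb T f w = pathProb T (F i) w) (i : I)
    (g : List (∀ j, A j) → A i → ℝ) (w : Fin T → ∀ j, A j) :
    pathProb T (Function.update (patch f F) i g) w =
      pathProb T (Function.update (F i) i g) w := by
  have on : ∀ t : Fin T, (∀ s < t, ∀ j, f j (histPrefix w s) (w s j) ≠ 0) → ∀ j,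
      patch f F j (histPrefix w t) = F i j (histPrefix w t) := by
    intro t h j
    rw [patch_onpath w t h, onpath_eq hf (hF i) (heq i) w t h]
  have fin : (∀ t : Fin T, ∀ j, j ≠ i →
      patch f F j (histPrefix w t) = F i j (histPrefix w t)) →
      pathProb T (Function.update (patch f F) i g) w =
      pathProb T (Function.update (F i) i g) w := by
    intro h
    refine Finset.prod_congr rfl fun t _ => Finset.prod_congr rfl fun k _ => ?_
    by_cases hk : k = i
    · subst hk
      simp
    · rw [Function.update_of_ne hk, Function.update_of_ne hk, h t k hk]
  rcases exists_first (f := f) w with h | ⟨t0, h, hz⟩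
  · exact fin fun t j _ => on t (fun s _ => h s) j
  · by_cases hj : ∃ j, j ≠ i ∧ f j (histPrefix w t0) (w t0 j) = 0
    · obtain ⟨j, hji, hj⟩ := hj
      refine (Finset.prod_eq_zero (Finset.mem_univ t0)
        (Finset.prod_eq_zero (Finset.mem_univ j) ?_)).trans
        (Finset.prod_eq_zero (Finset.mem_univ t0)
        (Finset.prod_eq_zero (Finset.mem_univ j) ?_)).symm
      · rw [Function.update_of_ne hji, patch_onpath w t0 h, hj]
      · rw [Function.update_of_ne hji, onpath_eq hf (hF i) (heq i) w t0 h, hj]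
    · push Not at hj
      obtain ⟨k, hk⟩ := hz
      have hki : k = i := by
        by_contra hne
        exact hj k hne hk
      subst hki
      refine fin fun t j hjk => ?_
      rcases lt_or_ge t0 t with ht | ht
      · exact patch_solo hjk (solo_later w t t0 ht k h hk hj)
      · exact on t (fun s hs => h s (hs.trans_le ht)) j

/-- **Finite-horizon purification for `η = 0`**: a finite-horizon weak
`ψ`-subjective `0`-equilibrium can be patched into a `ψ`-Nash equilibrium of the
`T`-period game that induces exactly the same distribution on play paths. -/
theorem finite_horizon_purification
    (T : ℕ) (hT : 1 ≤ T)
    (u : ∀ i : I, (∀ j, A j) → ℝ) (hu : ∀ i a, u i a ∈ Set.Icc (0 : ℝ) 1)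
    (lam : I → ℝ) (hlam : ∀ i, lam i ∈ Set.Ioo (0 : ℝ) 1)
    (ψ : ℝ) (hψ : 0 ≤ ψ)
    (f : Profile I A) (hf : IsProfile f)
    (hweak : IsWeakSubjT T u lam ψ 0 f) :
    ∃ fhat : Profile I A, IsProfile fhat ∧
      IsNashT T u lam ψ fhat ∧
      ∀ w : Fin T → ∀ j, A j, pathProb T fhat w = pathProb T f w := by
  choose F hF hFi hU hd using hweak
  have heq : ∀ i w, pathProb T f w = pathProb T (F i) w := fun i w =>
    (eq_of_dT hT (hd i) w).symm
  refine ⟨patch f F, patch_isProfile hf hF, ?_, patch_pathProb⟩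
  intro i g hg
  have h1 : UT T u lam i (patch f F) = UT T u lam i (F i) :=
    Finset.sum_congr rfl fun w _ => by rw [patch_pathProb, heq i]
  have h2 : UT T u lam i (Function.update (patch f F) i g) =
      UT T u lam i (Function.update (F i) i g) :=
    Finset.sum_congr rfl fun w _ => by rw [patch_dev hf hF heq]
  have h3 := le_ciSup (f := fun g : {g : List (∀ j, A j) → A i → ℝ // ∀ h, IsProbVec (g h)} =>
      UT T u lam i (Function.update (F i) i g.1))
    ⟨_, by
      rintro _ ⟨g, rfl⟩
      exact UT_bdd T u lam i _ ((hF i).upd i g.2)⟩ ⟨g, hg⟩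
  have h4 := hU i
  rw [h1, h2]
  simp only at h3
  linarith

end FiniteHorizon
end

section
/- In the finite-horizon repeated game setting [see context], fix the horizon T ≥ 1, the payoffs, the discount factors, and ψ > 0. Then for every θ > 0 there exists η̄ > 0 such that: whenever 0 ≤ η ≤ η̄ and the T-horizon strategy profile f is a finite-horizon weak ψ-subjective η-equilibrium, there exists a T-horizon strategy profile f̂ that is a ψ-Nash equilibrium of the T-period game and satisfies d_T(μ^{f̂}, μ^f) ≤ θ. (Finite-horizon robustness: weak subjective equilibria with sufficiently accurate beliefs are weakly close to exact approximate Nash equilibria of the T-period game; proved by a compactness and limit argument on the finite-dimensional product of simplices of T-horizon strategies.) -/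
open scoped BigOperators

section FiniteHorizon

variable {I : Type*} [Fintype I] [DecidableEq I] [Nonempty I]
variable {A : I → Type*} [∀ i, Fintype (A i)] [∀ i, Nonempty (A i)]

lemma aux_length {T : ℕ} (w : Fin T → ∀ j, A j) (t : Fin T) :
    (histPrefix w t).length = t.1 := by
  simp [histPrefix]

lemma aux_get {T : ℕ} (w : Fin T → ∀ j, A j) (t : Fin T) (k : ℕ)
    (hk : k < (histPrefix w t).length) (hkT : k < T) :
    (histPrefix w t)[k] = w ⟨k, hkT⟩ := by
  simp [histPrefix, Fin.castLE]

lemma aux_take {T : ℕ} (w : Fin T → ∀ j, A j) (t s : Fin T) (h : s ≤ t) :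
    (histPrefix w t).take s.1 = histPrefix w s := by
  have h' : s.1 ≤ t.1 := h
  apply List.ext_getElem
  · simp [histPrefix, h']
  · intro n h1 h2
    simp [histPrefix, Fin.castLE]

lemma aux_hist_congr {T : ℕ} (w w' : Fin T → ∀ j, A j) (t : Fin T)
    (h : ∀ s < t, w s = w' s) : histPrefix w t = histPrefix w' t := by
  unfold histPrefix
  congr 1
  funext s
  exact h _ s.2

/-- On-path prefix. -/
def auxOn {T : ℕ} (f : Profile I A) (w : Fin T → ∀ j, A j) (t : Fin T) : Prop :=
  ∀ s < t, ∀ j, f j (histPrefix w s) (w s j) ≠ 0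

/-- prefix probability -/
def auxQ (T : ℕ) (f : Profile I A) (t : ℕ) (w : Fin T → ∀ j, A j) : ℝ :=
  ∏ s ∈ Finset.univ.filter (fun s : Fin T => s.1 < t), ∏ i, f i (histPrefix w s) (w s i)

lemma auxQ_succ (T : ℕ) (f : Profile I A) (t : Fin T) (w : Fin T → ∀ j, A j)
    (a : ∀ j, A j) :
    auxQ T f (t.1 + 1) (Function.update w t a)
      = auxQ T f t.1 w * ∏ i, f i (histPrefix w t) (a i) := by
  unfold auxQ
  have : Finset.univ.filter (fun s : Fin T => s.1 < t.1 + 1)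
      = insert t (Finset.univ.filter (fun s : Fin T => s.1 < t.1)) := by
    ext s
    simp [Fin.ext_iff]
    omega
  rw [this, Finset.prod_insert (by simp), mul_comm]
  have hh : ∀ s : Fin T, s ≤ t →
      histPrefix (Function.update w t a) s = histPrefix w s := by
    intro s hs
    apply aux_hist_congr
    intro r hr
    rw [Function.update_of_ne (ne_of_lt (lt_of_lt_of_le hr hs))]
  congr 1
  · apply Finset.prod_congr rfl
    intro s hs
    have hs' : s < t := by simpa using hs
    rw [hh s hs'.le, Function.update_of_ne hs'.ne]
  · rw [hh t le_rfl]
    simp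

lemma aux_sum_one (p : ∀ i, A i → ℝ) (hp : ∀ i, IsProbVec (p i)) :
    ∑ a : ∀ j, A j, ∏ i, p i (a i) = 1 := by
  classical
  rw [← Fintype.prod_sum]
  simp [fun i => (hp i).2]

lemma auxQ_eq (T : ℕ) (f : Profile I A) (hf : IsProfile f) (t : Fin T)
    (w : Fin T → ∀ j, A j) :
    auxQ T f t.1 w = ∑ a, auxQ T f (t.1 + 1) (Function.update w t a) := by
  simp_rw [auxQ_succ]
  rw [← Finset.mul_sum, aux_sum_one _ (fun i => hf i _), mul_one]

lemma auxQ_last (T : ℕ) (f : Profile I A) (w : Fin T → ∀ j, A j) :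
    auxQ T f T w = pathProb T f w := by
  unfold auxQ pathProb
  congr 1
  simp

lemma auxQ_all (T : ℕ) (f f' : Profile I A) (hf : IsProfile f) (hf' : IsProfile f')
    (h : ∀ w, pathProb T f' w = pathProb T f w) (n : ℕ) (hn : n ≤ T) :
    ∀ w, auxQ T f' n w = auxQ T f n w := by
  induction hn using Nat.decreasingInduction with
  | self => intro w; rw [auxQ_last, auxQ_last, h]
  | of_succ k hk ih =>
    intro w
    have e1 := auxQ_eq T f hf ⟨k, hk⟩ w
    have e2 := auxQ_eq T f' hf' ⟨k, hk⟩ w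
    simp only at e1 e2
    rw [e1, e2]
    exact Finset.sum_congr rfl fun a _ => ih _

lemma aux_marg (p q : ∀ i, A i → ℝ) (hp : ∀ i, IsProbVec (p i)) (hq : ∀ i, IsProbVec (q i))
    (h : ∀ a : ∀ j, A j, ∏ i, q i (a i) = ∏ i, p i (a i)) : q = p := by
  classical
  have hex : ∀ i, ∃ a, p i a ≠ 0 := by
    intro i
    by_contra hc
    push Not at hc
    have := (hp i).2
    simp [hc] at this
  choose a ha using hex
  funext i b
  have key : ∀ (r : ∀ i, A i → ℝ) (c : A i), ∏ j, r j (Function.update a i c j)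
      = r i c * ∏ j ∈ Finset.univ.erase i, r j (a j) := by
    intro r c
    rw [← Finset.mul_prod_erase _ _ (Finset.mem_univ i)]
    congr 1
    · simp
    · apply Finset.prod_congr rfl
      intro j hj
      rw [Function.update_of_ne (Finset.ne_of_mem_erase hj)]
  have h2 : ∀ c, q i c * ∏ j ∈ Finset.univ.erase i, q j (a j)
      = p i c * ∏ j ∈ Finset.univ.erase i, p j (a j) := by
    intro c
    rw [← key, ← key, h]
  have h3 : ∏ j ∈ Finset.univ.erase i, q j (a j) = ∏ j ∈ Finset.univ.erase i, p j (a j) := by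
    have := Finset.sum_congr (rfl : (Finset.univ : Finset (A i)) = _) fun c _ => h2 c
    rwa [← Finset.sum_mul, ← Finset.sum_mul, (hp i).2, (hq i).2, one_mul, one_mul] at this
  have h4 := h2 b
  rw [h3] at h4
  exact mul_right_cancel₀ (Finset.prod_ne_zero_iff.2 fun j _ => ha j) h4

lemma aux_agree (T : ℕ) (f f' : Profile I A) (hf : IsProfile f) (hf' : IsProfile f')
    (h : ∀ w, pathProb T f' w = pathProb T f w) (w : Fin T → ∀ j, A j) (t : Fin T)
    (hon : auxOn f w t) (j : I) : f' j (histPrefix w t) = f j (histPrefix w t) := by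
  have hq : auxQ T f t.1 w ≠ 0 := by
    unfold auxQ
    refine Finset.prod_ne_zero_iff.2 fun s hs => Finset.prod_ne_zero_iff.2 fun j _ => ?_
    exact hon s (by simpa using hs) j
  have := aux_marg (fun j => f j (histPrefix w t)) (fun j => f' j (histPrefix w t))
    (fun j => hf j _) (fun j => hf' j _) (by
      intro a
      have e1 := auxQ_all T f f' hf hf' h (t.1 + 1) t.2 (Function.update w t a)
      rw [auxQ_succ, auxQ_succ, auxQ_all T f f' hf hf' h t.1 t.2.le] at e1
      exact mul_left_cancel₀ hq e1)
  exact congrFun this j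

/-- Player `i` is the unique first deviator in `h`. -/
def auxD (f : Profile I A) (i : I) (h : List (∀ j, A j)) : Prop :=
  ∃ k, ∃ hk : k < h.length,
    (∀ r, ∀ hr : r < k, ∀ j, f j (h.take r) ((h[r]'(hr.trans hk)) j) ≠ 0) ∧
    f i (h.take k) (h[k] i) = 0 ∧ ∀ j, j ≠ i → f j (h.take k) (h[k] j) ≠ 0

lemma auxD_iff {T : ℕ} (f : Profile I A) (i : I) (w : Fin T → ∀ j, A j) (t : Fin T) :
    auxD f i (histPrefix w t) ↔ ∃ s < t, auxOn f w s ∧ f i (histPrefix w s) (w s i) = 0 ∧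
      ∀ j, j ≠ i → f j (histPrefix w s) (w s j) ≠ 0 := by
  have key : ∀ s : Fin T, ∀ hs : s < t, ∀ j,
      f j ((histPrefix w t).take s.1)
        (((histPrefix w t)[s.1]'(by rw [aux_length]; exact hs)) j)
      = f j (histPrefix w s) (w s j) := by
    intro s hs j
    rw [aux_take w t s hs.le, aux_get w t s.1 _ s.2]
  constructor
  · rintro ⟨k, hk, h1, h2, h3⟩
    have hkt : k < t.1 := by rwa [aux_length] at hk
    have hkT : k < T := hkt.trans t.2
    refine ⟨⟨k, hkT⟩, hkt, ?_, ?_, ?_⟩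
    · intro r hr j
      rw [← key r (hr.trans hkt)]
      exact h1 r.1 hr j
    · rw [← key ⟨k, hkT⟩ hkt]; exact h2
    · intro j hj
      rw [← key ⟨k, hkT⟩ hkt]; exact h3 j hj
  · rintro ⟨s, hs, h1, h2, h3⟩
    refine ⟨s.1, by rw [aux_length]; exact hs, ?_, ?_, ?_⟩
    · intro r hr j
      have := h1 ⟨r, hr.trans s.2⟩ hr j
      rwa [← key ⟨r, hr.trans s.2⟩ (lt_trans (show (⟨r, hr.trans s.2⟩ : Fin T) < s from hr) hs)]
        at this
    · rw [key s hs]; exact h2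
    · intro j hj
      rw [key s hs]; exact h3 j hj

open Classical in
/-- The Nash profile. -/
noncomputable def auxHat (f : Profile I A) (F : I → Profile I A) : Profile I A :=
  fun j h => if hD : ∃ i, auxD f i h then F hD.choose j h else f j h

lemma auxHat_on {T : ℕ} (f : Profile I A) (F : I → Profile I A) (w : Fin T → ∀ j, A j)
    (t : Fin T) (hon : auxOn f w t) (j : I) :
    auxHat f F j (histPrefix w t) = f j (histPrefix w t) := by
  unfold auxHat
  rw [dif_neg]
  rintro ⟨i, hi⟩
  obtain ⟨s, hs, -, h2, -⟩ := (auxD_iff f i w t).1 hi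
  exact hon s hs i h2

lemma auxHat_dev {T : ℕ} (f : Profile I A) (F : I → Profile I A) (w : Fin T → ∀ j, A j)
    (t : Fin T) (i : I) (hD : auxD f i (histPrefix w t)) (j : I) :
    auxHat f F j (histPrefix w t) = F i j (histPrefix w t) := by
  unfold auxHat
  have hex : ∃ i, auxD f i (histPrefix w t) := ⟨i, hD⟩
  rw [dif_pos hex]
  have : hex.choose = i := by
    have hc := hex.choose_spec
    obtain ⟨s, hs, h1, h2, h3⟩ := (auxD_iff f i w t).1 hD
    obtain ⟨s', hs', h1', h2', h3'⟩ := (auxD_iff f _ w t).1 hc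
    rcases lt_trichotomy s s' with hlt | heq | hgt
    · exact absurd h2 (h1' s hlt i)
    · subst heq
      by_contra hne
      exact h3 _ hne h2'
    · exact absurd h2' (h1 s' hgt _)
  rw [this]

lemma aux_cases {T : ℕ} (f : Profile I A) (w : Fin T → ∀ j, A j) :
    (∀ t, auxOn f w t) ∨ ∃ s j, auxOn f w s ∧ f j (histPrefix w s) (w s j) = 0 := by
  by_cases h : ∀ t, auxOn f w t
  · exact Or.inl h
  · right
    have hex : ∃ s : Fin T, ∃ j, f j (histPrefix w s) (w s j) = 0 := by
      by_contra hc
      push Not at hc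
      exact h fun t s _ j => hc s j
    obtain ⟨s, hs, hmin⟩ := wellFounded_lt.has_min
      {s : Fin T | ∃ j, f j (histPrefix w s) (w s j) = 0} hex
    obtain ⟨j, hj⟩ := hs
    exact ⟨s, j, fun r hr j' h0 => hmin r ⟨j', h0⟩ hr, hj⟩

lemma auxHat_path (T : ℕ) (f : Profile I A) (F : I → Profile I A) (w : Fin T → ∀ j, A j) :
    pathProb T (auxHat f F) w = pathProb T f w := by
  unfold pathProb
  rcases aux_cases f w with h | ⟨s, j, hon, h0⟩
  · exact Finset.prod_congr rfl fun t _ => Finset.prod_congr rfl fun j _ => by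
      rw [auxHat_on f F w t (h t)]
  · refine (Finset.prod_eq_zero (Finset.mem_univ s)
      (Finset.prod_eq_zero (Finset.mem_univ j) ?_)).trans
      (Finset.prod_eq_zero (Finset.mem_univ s) (Finset.prod_eq_zero (Finset.mem_univ j) h0)).symm
    rw [auxHat_on f F w s hon, h0]

lemma auxHat_update (T : ℕ) (f : Profile I A) (F : I → Profile I A) (hf : IsProfile f)
    (hF : ∀ i, IsProfile (F i)) (hP : ∀ i w, pathProb T (F i) w = pathProb T f w)
    (i : I) (g : List (∀ j, A j) → A i → ℝ) (w : Fin T → ∀ j, A j) :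
    pathProb T (Function.update (auxHat f F) i g) w
      = pathProb T (Function.update (F i) i g) w := by
  have ag : ∀ t, auxOn f w t → ∀ j, F i j (histPrefix w t) = f j (histPrefix w t) :=
    fun t ht j => aux_agree T f (F i) hf (hF i) (hP i) w t ht j
  have fin : (∀ t, ∀ j, j ≠ i → auxHat f F j (histPrefix w t) = F i j (histPrefix w t)) →
      pathProb T (Function.update (auxHat f F) i g) w
      = pathProb T (Function.update (F i) i g) w := by
    intro h
    unfold pathProb
    refine Finset.prod_congr rfl fun t _ => Finset.prod_congr rfl fun j _ => ?_
    by_cases hj : j = i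
    · subst hj; simp
    · rw [Function.update_of_ne hj, Function.update_of_ne hj, h t j hj]
  rcases aux_cases f w with h | ⟨s, j, hon, h0⟩
  · exact fin fun t j _ => by rw [auxHat_on f F w t (h t), ag t (h t)]
  · by_cases hj : ∃ j, j ≠ i ∧ f j (histPrefix w s) (w s j) = 0
    · obtain ⟨j, hji, h0⟩ := hj
      unfold pathProb
      refine (Finset.prod_eq_zero (Finset.mem_univ s)
        (Finset.prod_eq_zero (Finset.mem_univ j) ?_)).trans
        (Finset.prod_eq_zero (Finset.mem_univ s)
          (Finset.prod_eq_zero (Finset.mem_univ j) ?_)).symm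
      · rw [Function.update_of_ne hji, auxHat_on f F w s hon, h0]
      · rw [Function.update_of_ne hji, ag s hon, h0]
    · push Not at hj
      have hji : j = i := by
        by_contra hne
        exact hj j hne h0
      subst hji
      apply fin
      intro t k _
      rcases le_or_gt t s with hts | hst
      · have hont : auxOn f w t := fun r hr => hon r (hr.trans_le hts)
        rw [auxHat_on f F w t hont, ag t hont]
      · exact auxHat_dev f F w t j ((auxD_iff f j w t).2 ⟨s, hst, hon, h0, hj⟩) k

lemma auxHat_profile (f : Profile I A) (F : I → Profile I A) (hf : IsProfile f)
    (hF : ∀ i, IsProfile (F i)) : IsProfile (auxHat f F) := by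
  intro j h
  unfold auxHat
  split_ifs with hD
  · exact hF _ _ _
  · exact hf _ _

lemma aux_nash (T : ℕ) (u : ∀ i : I, (∀ j, A j) → ℝ) (lam : I → ℝ) (ψ : ℝ)
    (f : Profile I A) (F : I → Profile I A) (hf : IsProfile f)
    (hF : ∀ i, IsProfile (F i)) (hP : ∀ i w, pathProb T (F i) w = pathProb T f w)
    (hN : ∀ i (g : List (∀ j, A j) → A i → ℝ), (∀ h, IsProbVec (g h)) →
      UT T u lam i (F i) ≥ UT T u lam i (Function.update (F i) i g) - ψ) :
    IsNashT T u lam ψ (auxHat f F) := by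
  intro i g hg
  have h := hN i g hg
  unfold UT at h ⊢
  simp_rw [auxHat_update T f F hf hF hP, auxHat_path]
  simp_rw [hP] at h
  exact h

lemma aux_prob_le {S : Type*} [Fintype S] (p : S → ℝ) (hp : IsProbVec p) (s : S) : p s ≤ 1 := by
  rw [← hp.2]
  exact Finset.single_le_sum (fun i _ => hp.1 i) (Finset.mem_univ s)

lemma aux_path_bd (T : ℕ) (f : Profile I A) (hf : IsProfile f) (w : Fin T → ∀ j, A j) :
    |pathProb T f w| ≤ 1 := by
  unfold pathProb
  rw [abs_of_nonneg (Finset.prod_nonneg fun t _ => Finset.prod_nonneg fun i _ => (hf i _).1 _)]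
  exact Finset.prod_le_one (fun t _ => Finset.prod_nonneg fun i _ => (hf i _).1 _)
    fun t _ => Finset.prod_le_one (fun i _ => (hf i _).1 _) fun i _ => aux_prob_le _ (hf i _) _

lemma aux_update_profile (f : Profile I A) (hf : IsProfile f) (i : I)
    (g : List (∀ j, A j) → A i → ℝ) (hg : ∀ h, IsProbVec (g h)) :
    IsProfile (Function.update f i g) := by
  intro j h
  by_cases hj : j = i
  · subst hj; simpa using hg h
  · rw [Function.update_of_ne hj]; exact hf j h

lemma aux_bdd (T : ℕ) (u : ∀ i : I, (∀ j, A j) → ℝ) (lam : I → ℝ) (i : I)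
    (f : Profile I A) (hf : IsProfile f) :
    BddAbove (Set.range fun g : {g : List (∀ j, A j) → A i → ℝ // ∀ h, IsProbVec (g h)} =>
        UT T u lam i (Function.update f i g.1)) := by
  refine ⟨∑ w : Fin T → ∀ j, A j, |(1 - lam i) * ∑ t : Fin T, lam i ^ (t : ℕ) * u i (w t)|, ?_⟩
  rintro _ ⟨g, rfl⟩
  refine Finset.sum_le_sum fun w _ => ?_
  refine (le_abs_self _).trans ?_
  rw [abs_mul]
  exact mul_le_of_le_one_left (abs_nonneg _)
    (aux_path_bd T _ (aux_update_profile f hf i g.1 g.2) w)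

lemma aux_ev (T : ℕ) (P Q : (Fin T → ∀ j, A j) → ℝ) (E : Set (Fin T → ∀ j, A j)) :
    |(∑ w, E.indicator P w) - ∑ w, E.indicator Q w| ≤ ∑ w, |P w - Q w| := by
  classical
  rw [← Finset.sum_sub_distrib]
  refine (Finset.abs_sum_le_sum_abs _ _).trans (Finset.sum_le_sum fun w _ => ?_)
  by_cases h : w ∈ E <;> simp [h]

lemma aux_dT_le (T : ℕ) (P Q : (Fin T → ∀ j, A j) → ℝ) :
    dT T P Q ≤ T * ∑ w, |P w - Q w| := by
  unfold dT
  have h0 : 0 ≤ ∑ w, |P w - Q w| := Finset.sum_nonneg fun _ _ => abs_nonneg _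
  calc _ ≤ ∑ t ∈ Finset.range T, ∑ w, |P w - Q w| := by
        refine Finset.sum_le_sum fun t _ => ?_
        have h1 : (2 : ℝ)⁻¹ ^ (t + 1) ≤ 1 := pow_le_one₀ (by norm_num) (by norm_num)
        calc _ ≤ (2 : ℝ)⁻¹ ^ (t + 1) * ∑ w, |P w - Q w| := by
              gcongr
              exact Real.iSup_le (fun E => aux_ev T P Q E.1) h0
          _ ≤ _ := mul_le_of_le_one_left h0 h1
    _ = _ := by simp

lemma aux_le_dT (T : ℕ) (hT : 1 ≤ T) (P Q : (Fin T → ∀ j, A j) → ℝ) (w : Fin T → ∀ j, A j) :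
    |P w - Q w| ≤ 2 ^ T * dT T P Q := by
  classical
  have h1 : |P w - Q w| ≤ ⨆ E : {E : Set (Fin T → ∀ j, A j) // DependsOnFirst T (T - 1 + 1) E},
      |(∑ w, E.1.indicator P w) - ∑ w, E.1.indicator Q w| := by
    have hd : DependsOnFirst T (T - 1 + 1) ({w} : Set (Fin T → ∀ j, A j)) := by
      intro v v' h
      have : v = v' := by
        funext s
        exact h s (by omega)
      rw [this]
    have hb : BddAbove (Set.range fun E : {E : Set (Fin T → ∀ j, A j) //
        DependsOnFirst T (T - 1 + 1) E} =>
        |(∑ w, E.1.indicator P w) - ∑ w, E.1.indicator Q w|) := by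
      refine ⟨∑ w, |P w - Q w|, ?_⟩
      rintro _ ⟨E, rfl⟩
      exact aux_ev T P Q E.1
    have := le_ciSup hb ⟨{w}, hd⟩
    simpa [Set.indicator_apply] using this
  have h2 : (2 : ℝ)⁻¹ ^ (T - 1 + 1) * |P w - Q w| ≤ dT T P Q := by
    unfold dT
    refine le_trans (mul_le_mul_of_nonneg_left h1 (by positivity)) ?_
    refine Finset.single_le_sum (f := fun t => (2 : ℝ)⁻¹ ^ (t + 1) *
      ⨆ E : {E : Set (Fin T → ∀ j, A j) // DependsOnFirst T (t + 1) E},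
      |(∑ w, E.1.indicator P w) - ∑ w, E.1.indicator Q w|) ?_ (Finset.mem_range.2 (by omega))
    intro t _
    exact mul_nonneg (by positivity) (Real.iSup_nonneg fun _ => abs_nonneg _)
  rw [Nat.sub_add_cancel hT, inv_pow] at h2
  rwa [inv_mul_le_iff₀ (by positivity)] at h2

lemma aux_compact : IsCompact {f : Profile I A | IsProfile f} := by
  have : {f : Profile I A | IsProfile f}
      = Set.pi Set.univ fun i => Set.pi Set.univ fun _ => stdSimplex ℝ (A i) := by
    ext f
    simp [IsProfile, IsProbVec, stdSimplex, Set.mem_pi]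
  rw [this]
  exact isCompact_univ_pi fun i => isCompact_univ_pi fun _ => isCompact_stdSimplex ℝ (A i)

lemma aux_cont_path (T : ℕ) (w : Fin T → ∀ j, A j) :
    Continuous fun f : Profile I A => pathProb T f w := by
  unfold pathProb
  fun_prop

lemma aux_cont_UT (T : ℕ) (u : ∀ i : I, (∀ j, A j) → ℝ) (lam : I → ℝ) (i : I) :
    Continuous fun f : Profile I A => UT T u lam i f := by
  unfold UT
  have := fun w => aux_cont_path (I := I) (A := A) T w
  fun_prop

/-- **Finite-horizon robustness**: for fixed horizon, payoffs, discount factors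
and `ψ > 0`, weak `ψ`-subjective `η`-equilibria with sufficiently small `η` are
weakly close (within any prescribed `θ`) to exact `ψ`-Nash equilibria of the
`T`-period game. -/
theorem finite_horizon_robustness
    (T : ℕ) (hT : 1 ≤ T)
    (u : ∀ i : I, (∀ j, A j) → ℝ) (hu : ∀ i a, u i a ∈ Set.Icc (0 : ℝ) 1)
    (lam : I → ℝ) (hlam : ∀ i, lam i ∈ Set.Ioo (0 : ℝ) 1)
    (ψ : ℝ) (hψ : 0 < ψ) :
    ∀ θ > (0 : ℝ), ∃ ηbar > (0 : ℝ),
      ∀ η : ℝ, 0 ≤ η → η ≤ ηbar →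
        ∀ f : Profile I A, IsProfile f → IsWeakSubjT T u lam ψ η f →
          ∃ fhat : Profile I A, IsProfile fhat ∧
            IsNashT T u lam ψ fhat ∧
            dT T (pathProb T fhat) (pathProb T f) ≤ θ := by
  intro θ hθ
  by_contra hc
  push Not at hc
  have hc' : ∀ n : ℕ, ∃ f : Profile I A, ∃ F : I → Profile I A, IsProfile f ∧
      (∀ i, IsProfile (F i)) ∧ (∀ i, F i i = f i) ∧
      (∀ i (g : List (∀ j, A j) → A i → ℝ), (∀ h, IsProbVec (g h)) →
        UT T u lam i (Function.update (F i) i g) - ψ ≤ UT T u lam i (F i)) ∧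
      (∀ i, dT T (pathProb T (F i)) (pathProb T f) ≤ 1 / ((n : ℝ) + 1)) ∧
      ∀ fhat : Profile I A, IsProfile fhat → IsNashT T u lam ψ fhat →
        θ < dT T (pathProb T fhat) (pathProb T f) := by
    intro n
    obtain ⟨η, -, h1, f, hf, hs, h2⟩ := hc (1 / ((n : ℝ) + 1)) (by positivity)
    choose F hF hFi hU hd using hs
    refine ⟨f, F, hf, hF, hFi, ?_, fun i => (hd i).trans h1, h2⟩
    intro i g hg
    have := le_ciSup (aux_bdd T u lam i (F i) (hF i)) ⟨g, hg⟩
    have h3 := hU i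
    simp only at this
    linarith
  choose f F hf hF hFi hU hd hno using hc'
  let 𝒰 : Ultrafilter ℕ := Filter.hyperfilter ℕ
  have h𝒰 : (𝒰 : Filter ℕ) ≤ Filter.atTop := by
    rw [← Nat.cofinite_eq_atTop]
    exact Filter.hyperfilter_le_cofinite
  have hlim : ∀ x : ℕ → Profile I A, (∀ n, IsProfile (x n)) →
      ∃ y, IsProfile y ∧ Filter.Tendsto x 𝒰 (nhds y) := by
    intro x hx
    obtain ⟨y, hy, hle⟩ := aux_compact.ultrafilter_le_nhds (𝒰.map x) (by
      simp only [Ultrafilter.coe_map, Filter.le_principal_iff, Filter.mem_map]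
      exact Filter.univ_mem' hx)
    exact ⟨y, hy, hle⟩
  obtain ⟨f₀, hf₀, hft⟩ := hlim f hf
  have := fun i => hlim (fun n => F n i) (fun n => hF n i)
  choose F₀ hF₀ hFt using this
  have hP : ∀ i w, pathProb T (F₀ i) w = pathProb T f₀ w := by
    intro i w
    have t1 : Filter.Tendsto (fun n => |pathProb T (F n i) w - pathProb T (f n) w|) 𝒰
        (nhds |pathProb T (F₀ i) w - pathProb T f₀ w|) :=
      ((((aux_cont_path T w).tendsto _).comp (hFt i)).sub
        (((aux_cont_path T w).tendsto _).comp hft)).abs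
    have t2 : Filter.Tendsto (fun n : ℕ => (2 : ℝ) ^ T * (1 / ((n : ℝ) + 1))) 𝒰
        (nhds ((2 : ℝ) ^ T * 0)) :=
      (tendsto_one_div_add_atTop_nhds_zero_nat.mono_left h𝒰).const_mul _
    have := le_of_tendsto_of_tendsto' t1 t2 fun n =>
      (aux_le_dT T hT _ _ w).trans (mul_le_mul_of_nonneg_left (hd n i) (by positivity))
    rw [mul_zero] at this
    exact sub_eq_zero.1 (abs_nonpos_iff.1 this)
  have hN : ∀ i (g : List (∀ j, A j) → A i → ℝ), (∀ h, IsProbVec (g h)) →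
      UT T u lam i (F₀ i) ≥ UT T u lam i (Function.update (F₀ i) i g) - ψ := by
    intro i g hg
    have c : Continuous fun x : Profile I A => UT T u lam i (Function.update x i g) - ψ :=
      ((aux_cont_UT T u lam i).comp (continuous_id.update i continuous_const)).sub continuous_const
    exact le_of_tendsto_of_tendsto' ((c.tendsto _).comp (hFt i))
      (((aux_cont_UT T u lam i).tendsto _).comp (hFt i)) fun n => hU n i g hg
  have hnash := aux_nash T u lam ψ f₀ F₀ hf₀ hF₀ hP hN
  have hbad := fun n => hno n _ (auxHat_profile f₀ F₀ hf₀ hF₀) hnash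
  have t3 : Filter.Tendsto (fun n => (T : ℝ) * ∑ w, |pathProb T f₀ w - pathProb T (f n) w|) 𝒰
      (nhds ((T : ℝ) * ∑ w, |pathProb T f₀ w - pathProb T f₀ w|)) :=
    (tendsto_finsetSum _ fun w _ =>
      (tendsto_const_nhds.sub (((aux_cont_path T w).tendsto _).comp hft)).abs).const_mul _
  have := ge_of_tendsto' t3 fun n => (hbad n).le.trans ((aux_dT_le T _ _).trans (by
    simp_rw [auxHat_path]; exact le_rfl))
  simp at this
  linarith


end FiniteHorizon
end

section
/- Let A_i and A_{−i} be nonempty finite sets, A := A_i × A_{−i}, u : A → ℝ with 0 ≤ u ≤ 1, λ ∈ (0,1), and κ ∈ ℕ. Let g be an opponent rule assigning to each history h ∈ List A a probability vector g(h) on A_{−i}, and suppose g has memory at most κ: g h = g h' whenever the last min(κ, length h) entries of h equal the last min(κ, length h') entries of h'. A continuation strategy is a function σ assigning to each h ∈ List A a probability vector σ(h) on A_i. Given an initial history h₀ ∈ List A, for each k ≥ 0 the pair (σ, g) induces the probability distribution on A^{k+1} given by P_k^{σ,g,h₀}(a^0,…,a^k) := ∏_{j=0}^{k} σ(h₀ ++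 (a^0,…,a^{j−1}))((a^j)_i) · g(h₀ ++ (a^0,…,a^{j−1}))((a^j)_{−i}), and the continuation value is V(σ | h₀; g) := ∑_{k=0}^{∞} (1−λ) λ^k ∑_{w ∈ A^{k+1}} P_k^{σ,g,h₀}(w) · u(w_k) (the series converges since each term lies in [0, (1−λ)λ^k]). Then there exists a function π assigning to each sequence over A of length at most κ a probability vector on A_i such that, defining the stationary strategy σ*(h) := π(last min(κ, length h) entries of h), for every initial history h₀: V(σ* | h₀; g) = ⨆_{σ} V(σ | h₀; g), where the supremum is over all continuation strategies σ. In particular, the supremum of the continuation value over all continuation strategies equals its supremum over strategies with memory at most κ. (Against a bounded-memory opponent, there is a stationary Markov best response in the memory state.) -/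
open scoped BigOperators

section BoundedMemory

variable {Ai Am : Type*} [Fintype Ai] [Nonempty Ai] [Fintype Am] [Nonempty Am]

/-- The last `min (κ, length h)` entries of the history `h`. -/
def suffixK (κ : ℕ) (h : List (Ai × Am)) : List (Ai × Am) :=
  h.drop (h.length - κ)

/-- The probability, under own continuation strategy `σ` and opponent rule `g`,
of the block `w` of the next `k+1` joint actions played after the initial
history `h₀`. -/
def blockProb (σ : List (Ai × Am) → Ai → ℝ) (g : List (Ai × Am) → Am → ℝ)
    (h₀ : List (Ai × Am)) {k : ℕ} (w : Fin (k + 1) → Ai × Am) : ℝ :=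
  ∏ j : Fin (k + 1),
    σ (h₀ ++ List.ofFn fun s : Fin j.1 => w (Fin.castLE j.isLt.le s)) (w j).1 *
      g (h₀ ++ List.ofFn fun s : Fin j.1 => w (Fin.castLE j.isLt.le s)) (w j).2

/-- The normalized discounted continuation value
`V(σ | h₀; g) = ∑_{k≥0} (1-λ) λ^k ∑_{w ∈ A^{k+1}} P_k(w) u(w_k)`. -/
noncomputable def contValue (lam : ℝ) (u : Ai × Am → ℝ)
    (σ : List (Ai × Am) → Ai → ℝ) (g : List (Ai × Am) → Am → ℝ)
    (h₀ : List (Ai × Am)) : ℝ :=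
  ∑' k : ℕ, (1 - lam) * lam ^ k *
    ∑ w : Fin (k + 1) → Ai × Am, blockProb σ g h₀ w * u (w (Fin.last k))

theorem suffixK_len (κ : ℕ) (h : List (Ai × Am)) : (suffixK κ h).length ≤ κ := by
  simp only [suffixK, List.length_drop]; omega

theorem suffixK_idem (κ : ℕ) (h : List (Ai × Am)) :
    suffixK κ (suffixK κ h) = suffixK κ h := by
  have := suffixK_len κ h
  rw [suffixK, Nat.sub_eq_zero_of_le this, List.drop_zero]

theorem suffixK_snoc (κ : ℕ) (h : List (Ai × Am)) (a : Ai × Am) :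
    suffixK κ (suffixK κ h ++ [a]) = suffixK κ (h ++ [a]) := by
  have key : suffixK κ h ++ [a] = (h ++ [a]).drop (h.length - κ) := by
    rw [List.drop_append_of_le_length (by omega)]; rfl
  rw [key]
  simp only [suffixK, List.drop_drop, List.length_drop, List.length_append, List.length_cons,
    List.length_nil]
  congr 1
  omega

theorem blockProb_cons (σ : List (Ai × Am) → Ai → ℝ) (g : List (Ai × Am) → Am → ℝ)
    (h : List (Ai × Am)) {k : ℕ} (a : Ai × Am) (w : Fin (k + 1) → Ai × Am) :
    blockProb σ g h (Fin.cons a w : Fin (k + 1 + 1) → Ai × Am) =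
      σ h a.1 * g h a.2 * blockProb σ g (h ++ [a]) w := by
  unfold blockProb
  rw [Fin.prod_univ_succ]
  congr 1
  · simp
  · apply Finset.prod_congr rfl
    intro j _
    have : (List.ofFn fun s : Fin (j.succ).1 =>
        (Fin.cons a w : Fin (k + 1 + 1) → Ai × Am) (Fin.castLE j.succ.isLt.le s)) =
        a :: List.ofFn fun s : Fin j.1 => w (Fin.castLE j.isLt.le s) := by
      exact List.ofFn_succ
    rw [this, Fin.cons_succ, List.append_assoc]
    rfl

/-- expected payoff in period `k` -/
noncomputable def perQ (u : Ai × Am → ℝ)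
    (σ : List (Ai × Am) → Ai → ℝ) (g : List (Ai × Am) → Am → ℝ)
    (k : ℕ) (h : List (Ai × Am)) : ℝ :=
  ∑ w : Fin (k + 1) → Ai × Am, blockProb σ g h w * u (w (Fin.last k))

theorem perQ_zero (u : Ai × Am → ℝ)
    (σ : List (Ai × Am) → Ai → ℝ) (g : List (Ai × Am) → Am → ℝ)
    (h : List (Ai × Am)) :
    perQ u σ g 0 h = ∑ x : Ai × Am, σ h x.1 * g h x.2 * u x := by
  unfold perQ
  rw [← (Equiv.funUnique (Fin 1) (Ai × Am)).symm.sum_comp]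
  apply Finset.sum_congr rfl
  intro x _
  simp [blockProb]

theorem perQ_succ (u : Ai × Am → ℝ)
    (σ : List (Ai × Am) → Ai → ℝ) (g : List (Ai × Am) → Am → ℝ)
    (k : ℕ) (h : List (Ai × Am)) :
    perQ u σ g (k + 1) h = ∑ x : Ai × Am, σ h x.1 * g h x.2 * perQ u σ g k (h ++ [x]) := by
  unfold perQ
  rw [← (Fin.consEquiv (fun _ : Fin (k + 1 + 1) => Ai × Am)).sum_comp, Fintype.sum_prod_type]
  apply Finset.sum_congr rfl
  intro x _
  rw [Finset.mul_sum]
  apply Finset.sum_congr rfl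
  intro w _
  have h1 : (Fin.consEquiv (fun _ : Fin (k + 1 + 1) => Ai × Am)) (x, w) =
    (Fin.cons x w : Fin (k + 1 + 1) → Ai × Am) := rfl
  rw [h1, blockProb_cons, ← Fin.succ_last, Fin.cons_succ]
  ring

theorem sum_pq {p : Ai → ℝ} {q : Am → ℝ} (hp : IsProbVec p) (hq : IsProbVec q) (C : ℝ) :
    ∑ x : Ai × Am, p x.1 * q x.2 * C = C := by
  rw [← Finset.sum_mul, Fintype.sum_prod_type]
  simp only [← Finset.mul_sum, hq.2, mul_one, hp.2, one_mul]

theorem sum_pq_le {p : Ai → ℝ} {q : Am → ℝ} (hp : IsProbVec p) (hq : IsProbVec q)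
    {f f' : Ai × Am → ℝ} (hf : ∀ x, f x ≤ f' x) :
    ∑ x : Ai × Am, p x.1 * q x.2 * f x ≤ ∑ x : Ai × Am, p x.1 * q x.2 * f' x :=
  Finset.sum_le_sum fun x _ =>
    mul_le_mul_of_nonneg_left (hf x) (mul_nonneg (hp.1 _) (hq.1 _))

theorem perQ_mem {u : Ai × Am → ℝ} (hu : ∀ a, u a ∈ Set.Icc (0 : ℝ) 1)
    {σ : List (Ai × Am) → Ai → ℝ} {g : List (Ai × Am) → Am → ℝ}
    (hσ : ∀ h, IsProbVec (σ h)) (hg : ∀ h, IsProbVec (g h)) (k : ℕ) :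
    ∀ h, perQ u σ g k h ∈ Set.Icc (0 : ℝ) 1 := by
  have key : ∀ h (f : Ai × Am → ℝ), (∀ x, f x ∈ Set.Icc (0 : ℝ) 1) →
      ∑ x : Ai × Am, σ h x.1 * g h x.2 * f x ∈ Set.Icc (0 : ℝ) 1 := by
    intro h f hf
    constructor
    · have := sum_pq_le (hσ h) (hg h) (fun x => (hf x).1)
      rwa [sum_pq (hσ h) (hg h)] at this
    · have := sum_pq_le (hσ h) (hg h) (fun x => (hf x).2)
      rwa [sum_pq (hσ h) (hg h)] at this
  induction k with
  | zero => intro h; rw [perQ_zero]; exact key h u hu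
  | succ k ih => intro h; rw [perQ_succ]; exact key h _ (fun x => ih _)

section Val

variable {lam : ℝ} (hlam : lam ∈ Set.Ioo (0 : ℝ) 1)
    {u : Ai × Am → ℝ} (hu : ∀ a, u a ∈ Set.Icc (0 : ℝ) 1)
    {σ : List (Ai × Am) → Ai → ℝ} {g : List (Ai × Am) → Am → ℝ}
    (hσ : ∀ h, IsProbVec (σ h)) (hg : ∀ h, IsProbVec (g h))

theorem hasSum_geo (hlam : lam ∈ Set.Ioo (0 : ℝ) 1) :
    HasSum (fun k : ℕ => (1 - lam) * lam ^ k) 1 := by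
  have := (hasSum_geometric_of_lt_one hlam.1.le hlam.2).mul_left (1 - lam)
  rwa [mul_inv_cancel₀ (by linarith [hlam.2])] at this

theorem summable_perQ (hlam : lam ∈ Set.Ioo (0 : ℝ) 1) (hu : ∀ a, u a ∈ Set.Icc (0 : ℝ) 1)
    (hσ : ∀ h, IsProbVec (σ h)) (hg : ∀ h, IsProbVec (g h)) (h : List (Ai × Am)) :
    Summable (fun k : ℕ => (1 - lam) * lam ^ k * perQ u σ g k h) := by
  have h0 : ∀ k : ℕ, 0 ≤ (1 - lam) * lam ^ k := fun k =>
    mul_nonneg (by linarith [hlam.2]) (pow_nonneg hlam.1.le _)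
  refine Summable.of_nonneg_of_le (fun k => ?_) (fun k => ?_) (hasSum_geo hlam).summable
  · exact mul_nonneg (h0 k) (perQ_mem hu hσ hg k h).1
  · exact mul_le_of_le_one_right (h0 k) (perQ_mem hu hσ hg k h).2

theorem contValue_mem (hlam : lam ∈ Set.Ioo (0 : ℝ) 1) (hu : ∀ a, u a ∈ Set.Icc (0 : ℝ) 1)
    (hσ : ∀ h, IsProbVec (σ h)) (hg : ∀ h, IsProbVec (g h)) (h : List (Ai × Am)) :
    contValue lam u σ g h ∈ Set.Icc (0 : ℝ) 1 := by
  have h0 : ∀ k : ℕ, 0 ≤ (1 - lam) * lam ^ k := fun k =>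
    mul_nonneg (by linarith [hlam.2]) (pow_nonneg hlam.1.le _)
  constructor
  · exact tsum_nonneg fun k => mul_nonneg (h0 k) (perQ_mem hu hσ hg k h).1
  · rw [← (hasSum_geo hlam).tsum_eq]
    exact (summable_perQ hlam hu hσ hg h).tsum_le_tsum
      (fun k => mul_le_of_le_one_right (h0 k) (perQ_mem hu hσ hg k h).2)
      (hasSum_geo hlam).summable

theorem contValue_rec (hlam : lam ∈ Set.Ioo (0 : ℝ) 1) (hu : ∀ a, u a ∈ Set.Icc (0 : ℝ) 1)
    (hσ : ∀ h, IsProbVec (σ h)) (hg : ∀ h, IsProbVec (g h)) (h : List (Ai × Am)) :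
    contValue lam u σ g h = ∑ x : Ai × Am, σ h x.1 * g h x.2 *
      ((1 - lam) * u x + lam * contValue lam u σ g (h ++ [x])) := by
  have e : ∀ h, contValue lam u σ g h = ∑' k : ℕ, (1 - lam) * lam ^ k * perQ u σ g k h :=
    fun _ => rfl
  have hs := summable_perQ (u := u) hlam hu hσ hg
  rw [e h, (hs h).tsum_eq_zero_add]
  have h1 : ∀ k : ℕ, (1 - lam) * lam ^ (k + 1) * perQ u σ g (k + 1) h =
      ∑ x : Ai × Am, (σ h x.1 * g h x.2 * lam) *
        ((1 - lam) * lam ^ k * perQ u σ g k (h ++ [x])) := by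
    intro k
    rw [perQ_succ, Finset.mul_sum]
    exact Finset.sum_congr rfl fun x _ => by ring
  simp_rw [h1]
  rw [Summable.tsum_finsetSum (fun x _ => (hs (h ++ [x])).mul_left _), perQ_zero,
    Finset.mul_sum, ← Finset.sum_add_distrib]
  refine Finset.sum_congr rfl fun x _ => ?_
  rw [tsum_mul_left, ← e]
  ring

end Val

theorem contract_nonpos {S : Type*} {lam : ℝ} (hlam : lam ∈ Set.Ioo (0 : ℝ) 1) (d : S → ℝ)
    (C : ℝ) (hC : ∀ s, d s ≤ C)
    (hstep : ∀ C, (∀ s, d s ≤ C) → ∀ s, d s ≤ lam * C) : ∀ s, d s ≤ 0 := by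
  have h1 : ∀ n : ℕ, ∀ s, d s ≤ lam ^ n * C := by
    intro n
    induction n with
    | zero => simpa using hC
    | succ n ih =>
      intro s
      have := hstep _ ih s
      rw [pow_succ]; linarith
  intro s
  have h2 : Filter.Tendsto (fun n : ℕ => lam ^ n * C) Filter.atTop (nhds (0 * C)) :=
    (tendsto_pow_atTop_nhds_zero_of_lt_one hlam.1.le hlam.2).mul_const C
  rw [zero_mul] at h2
  exact ge_of_tendsto' h2 (fun n => h1 n s)

theorem bellman_exists
    (lam : ℝ) (hlam : lam ∈ Set.Ioo (0 : ℝ) 1) (κ : ℕ)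
    (u : Ai × Am → ℝ)
    (g : List (Ai × Am) → Am → ℝ) (hg : ∀ h, IsProbVec (g h))
    (hmem : ∀ h h', suffixK κ h = suffixK κ h' → g h = g h') :
    ∃ (v : List (Ai × Am) → ℝ) (act : {l : List (Ai × Am) // l.length ≤ κ} → Ai),
      (∃ B, ∀ h, |v h| ≤ B) ∧
      (∀ h a, ∑ b, g h b * ((1 - lam) * u (a, b) + lam * v (h ++ [(a, b)])) ≤ v h) ∧
      (∀ h, ∑ b, g h b * ((1 - lam) * u (act ⟨suffixK κ h, suffixK_len κ h⟩, b) +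
        lam * v (h ++ [(act ⟨suffixK κ h, suffixK_len κ h⟩, b)])) = v h) := by
  classical
  let M := {l : List (Ai × Am) // l.length ≤ κ}
  haveI : Finite M := (List.finite_length_le (Ai × Am) κ).to_subtype
  letI : Fintype M := Fintype.ofFinite M
  let nx : List (Ai × Am) → M := fun h => ⟨suffixK κ h, suffixK_len κ h⟩
  let R : (M → ℝ) → M → Ai → ℝ := fun f l a =>
    ∑ b, g l.1 b * ((1 - lam) * u (a, b) + lam * f (nx (l.1 ++ [(a, b)])))
  let T : (M → ℝ) → M → ℝ := fun f l => ⨆ a, R f l a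
  have hR : ∀ f f' l a, R f l a ≤ R f' l a + lam * dist f f' := by
    intro f f' l a
    have : R f' l a + lam * dist f f' = ∑ b, g l.1 b *
        ((1 - lam) * u (a, b) + lam * (f' (nx (l.1 ++ [(a, b)])) + dist f f')) := by
      have h1 : lam * dist f f' = ∑ b, g l.1 b * (lam * dist f f') := by
        rw [← Finset.sum_mul, (hg l.1).2, one_mul]
      rw [h1, ← Finset.sum_add_distrib]
      exact Finset.sum_congr rfl fun b _ => by ring
    rw [this]
    refine Finset.sum_le_sum fun b _ => mul_le_mul_of_nonneg_left ?_ ((hg l.1).1 b)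
    have h2 := dist_le_pi_dist f f' (nx (l.1 ++ [(a, b)]))
    rw [Real.dist_eq] at h2
    have h3 := le_of_abs_le h2
    have := hlam.1
    gcongr
    linarith
  have hle : ∀ f l a, R f l a ≤ T f l := fun f l a =>
    le_ciSup (Set.finite_range (R f l)).bddAbove a
  have hT : ∀ f f' l, T f l ≤ T f' l + lam * dist f f' := fun f f' l =>
    ciSup_le fun a => (hR f f' l a).trans (by linarith [hle f' l a])
  have hc : ContractingWith ⟨lam, hlam.1.le⟩ T := by
    refine ⟨hlam.2, LipschitzWith.of_dist_le_mul fun f f' => ?_⟩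
    refine (dist_pi_le_iff (mul_nonneg hlam.1.le dist_nonneg)).2 fun l => ?_
    rw [Real.dist_eq, abs_sub_le_iff]
    have h1 := hT f f' l
    have h2 := hT f' f l
    rw [dist_comm f' f] at h2
    constructor
    · change _ ≤ lam * _; linarith
    · change _ ≤ lam * _; linarith
  let f := ContractingWith.fixedPoint T hc
  have hf : T f = f := hc.fixedPoint_isFixedPt
  have hex : ∀ l, ∃ a, R f l a = T f l := fun l => exists_eq_ciSup_of_finite
  choose act hact using hex
  have hRv : ∀ h a, ∑ b, g h b * ((1 - lam) * u (a, b) + lam * f (nx (h ++ [(a, b)]))) =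
      R f (nx h) a := by
    intro h a
    have h1 : g h = g (nx h).1 := hmem _ _ (suffixK_idem κ h).symm
    have h2 : ∀ b, nx ((nx h).1 ++ [(a, b)]) = nx (h ++ [(a, b)]) := fun b =>
      Subtype.ext (suffixK_snoc κ h (a, b))
    simp only [R, h2, ← h1]
  refine ⟨fun h => f (nx h), act, ⟨‖f‖, fun h => norm_le_pi_norm f (nx h)⟩, ?_, ?_⟩
  · intro h a
    rw [hRv h a]
    exact (hle f (nx h) a).trans_eq (congrFun hf _)
  · intro h
    exact ((hRv h _).trans (hact (nx h))).trans (congrFun hf _)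

theorem best_aux
    (lam : ℝ) (hlam : lam ∈ Set.Ioo (0 : ℝ) 1) (κ : ℕ)
    (u : Ai × Am → ℝ) (hu : ∀ a, u a ∈ Set.Icc (0 : ℝ) 1)
    (g : List (Ai × Am) → Am → ℝ) (hg : ∀ h, IsProbVec (g h))
    (hmem : ∀ h h', suffixK κ h = suffixK κ h' → g h = g h') :
    ∃ π : {l : List (Ai × Am) // l.length ≤ κ} → Ai → ℝ,
      (∀ l, IsProbVec (π l)) ∧
      ∀ h₀ : List (Ai × Am), ∀ σ : List (Ai × Am) → Ai → ℝ, (∀ h, IsProbVec (σ h)) →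
        contValue lam u σ g h₀ ≤ contValue lam u
            (fun h => π ⟨suffixK κ h, suffixK_len κ h⟩) g h₀ := by
  classical
  obtain ⟨v, act, ⟨B, hB⟩, hle, heq⟩ := bellman_exists lam hlam κ u g hg hmem
  have hπ : ∀ l, IsProbVec (fun a => if a = act l then (1 : ℝ) else 0) := fun l =>
    ⟨fun a => by beta_reduce; split_ifs <;> norm_num, by simp⟩
  refine ⟨fun l a => if a = act l then 1 else 0, hπ, ?_⟩
  intro h₀ σ hσ
  have h1 : ∀ h, contValue lam u σ g h - v h ≤ 0 := by
    refine contract_nonpos hlam _ (1 + B) (fun h => ?_) (fun C hC h => ?_)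
    · have := (contValue_mem hlam hu hσ hg h).2
      have := (abs_le.1 (hB h)).1
      linarith
    · rw [contValue_rec hlam hu hσ hg h]
      have a1 := sum_pq_le (hσ h) (hg h)
        (f := fun x => (1 - lam) * u x + lam * contValue lam u σ g (h ++ [x]))
        (f' := fun x => ((1 - lam) * u x + lam * v (h ++ [x])) + lam * C) (fun x => by
          have := mul_le_mul_of_nonneg_left (hC (h ++ [x])) hlam.1.le
          linarith)
      have a2 : ∑ x : Ai × Am, σ h x.1 * g h x.2 *
          (((1 - lam) * u x + lam * v (h ++ [x])) + lam * C) ≤ v h + lam * C := by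
        simp_rw [mul_add _ _ (lam * C)]
        rw [Finset.sum_add_distrib, sum_pq (hσ h) (hg h), Fintype.sum_prod_type]
        gcongr
        calc _ = ∑ a, σ h a * ∑ b, g h b * ((1 - lam) * u (a, b) + lam * v (h ++ [(a, b)])) := by
              simp only [Finset.mul_sum, mul_assoc]
          _ ≤ ∑ a, σ h a * v h := Finset.sum_le_sum fun a _ =>
              mul_le_mul_of_nonneg_left (hle h a) ((hσ h).1 a)
          _ = v h := by rw [← Finset.sum_mul, (hσ h).2, one_mul]
      linarith
  set τ : List (Ai × Am) → Ai → ℝ :=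
    fun h a => if a = act ⟨suffixK κ h, suffixK_len κ h⟩ then 1 else 0 with hτd
  have hτ : ∀ h, IsProbVec (τ h) := fun h => hπ _
  have h2 : ∀ h, v h - contValue lam u τ g h ≤ 0 := by
    refine contract_nonpos hlam _ B (fun h => ?_) (fun C hC h => ?_)
    · have := (contValue_mem hlam hu hτ hg h).1
      have := (abs_le.1 (hB h)).2
      linarith
    · rw [contValue_rec hlam hu hτ hg h]
      have a1 := sum_pq_le (hτ h) (hg h)
        (f' := fun x => ((1 - lam) * u x + lam * contValue lam u τ g (h ++ [x])) + lam * C)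
        (f := fun x => ((1 - lam) * u x + lam * v (h ++ [x]))) (fun x => by
          have := mul_le_mul_of_nonneg_left (hC (h ++ [x])) hlam.1.le
          linarith)
      have a2 : ∑ x : Ai × Am, τ h x.1 * g h x.2 *
          ((1 - lam) * u x + lam * v (h ++ [x])) = v h := by
        rw [Fintype.sum_prod_type, ← heq h]
        rw [Finset.sum_eq_single (act ⟨suffixK κ h, suffixK_len κ h⟩)]
        · simp [hτd]
        · intro a _ ha
          simp [hτd, ha]
        · simp
      rw [a2] at a1
      simp_rw [mul_add _ _ (lam * C)] at a1
      rw [Finset.sum_add_distrib, sum_pq (hτ h) (hg h)] at a1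
      linarith
  have h3 := h1 h₀
  have h4 := h2 h₀
  change _ ≤ contValue lam u τ g h₀
  linarith

/-- **Against a bounded-memory opponent there is a stationary Markov best
response in the memory state.** If `g` has memory at most `κ`, there is a map `π`
from memory states (histories of length at most `κ`) to mixed actions such that
the induced stationary strategy attains, from every initial history, the supremum
of the continuation value over all continuation strategies; in particular that
supremum equals the supremum over strategies with memory at most `κ`. -/
theorem stationary_markov_best_response
    (lam : ℝ) (hlam : lam ∈ Set.Ioo (0 : ℝ) 1) (κ : ℕ)
    (u : Ai × Am → ℝ) (hu : ∀ a, u a ∈ Set.Icc (0 : ℝ) 1)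
    (g : List (Ai × Am) → Am → ℝ) (hg : ∀ h, IsProbVec (g h))
    (hmem : ∀ h h', suffixK κ h = suffixK κ h' → g h = g h') :
    ∃ π : {l : List (Ai × Am) // l.length ≤ κ} → Ai → ℝ,
      (∀ l, IsProbVec (π l)) ∧
      (∀ h₀ : List (Ai × Am),
        contValue lam u
            (fun h => π ⟨suffixK κ h, by
              simp only [suffixK, List.length_drop]; omega⟩) g h₀ =
          ⨆ σ : {σ : List (Ai × Am) → Ai → ℝ // ∀ h, IsProbVec (σ h)},
            contValue lam u σ.1 g h₀) ∧
      (∀ h₀ : List (Ai × Am),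
        (⨆ σ : {σ : List (Ai × Am) → Ai → ℝ // ∀ h, IsProbVec (σ h)},
            contValue lam u σ.1 g h₀) =
          ⨆ σ : {σ : List (Ai × Am) → Ai → ℝ //
              (∀ h, IsProbVec (σ h)) ∧
              ∀ h h', suffixK κ h = suffixK κ h' → σ h = σ h'},
            contValue lam u σ.1 g h₀) := by
  obtain ⟨π, hπ, hbest⟩ := best_aux lam hlam κ u hu g hg hmem
  have hsup : ∀ h₀ : List (Ai × Am),
        contValue lam u (fun h => π ⟨suffixK κ h, suffixK_len κ h⟩) g h₀ =
          ⨆ σ : {σ : List (Ai × Am) → Ai → ℝ // ∀ h, IsProbVec (σ h)},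
            contValue lam u σ.1 g h₀ := by
    intro h₀
    let τ : {σ : List (Ai × Am) → Ai → ℝ // ∀ h, IsProbVec (σ h)} :=
      ⟨fun h => π ⟨suffixK κ h, suffixK_len κ h⟩, fun h => hπ _⟩
    haveI : Nonempty {σ : List (Ai × Am) → Ai → ℝ // ∀ h, IsProbVec (σ h)} := ⟨τ⟩
    refine le_antisymm (le_ciSup (f := fun σ : {σ : List (Ai × Am) → Ai → ℝ //
      ∀ h, IsProbVec (σ h)} => contValue lam u σ.1 g h₀) ⟨1, ?_⟩ τ)
      (ciSup_le fun σ => hbest h₀ σ.1 σ.2)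
    rintro _ ⟨σ, rfl⟩
    exact (contValue_mem hlam hu σ.2 hg h₀).2
  refine ⟨π, hπ, hsup, fun h₀ => ?_⟩
  rw [← hsup h₀]
  let τ : {σ : List (Ai × Am) → Ai → ℝ // (∀ h, IsProbVec (σ h)) ∧
              ∀ h h', suffixK κ h = suffixK κ h' → σ h = σ h'} :=
    ⟨fun h => π ⟨suffixK κ h, suffixK_len κ h⟩, fun h => hπ _, fun h h' e => by
      simp only [e]⟩
  haveI : Nonempty {σ : List (Ai × Am) → Ai → ℝ // (∀ h, IsProbVec (σ h)) ∧
              ∀ h h', suffixK κ h = suffixK κ h' → σ h = σ h'} := ⟨τ⟩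
  refine le_antisymm (le_ciSup (f := fun σ : {σ : List (Ai × Am) → Ai → ℝ //
      (∀ h, IsProbVec (σ h)) ∧ ∀ h h', suffixK κ h = suffixK κ h' → σ h = σ h'} =>
      contValue lam u σ.1 g h₀) ⟨1, ?_⟩ τ)
      (ciSup_le fun σ => hbest h₀ σ.1 σ.2.1)
  rintro _ ⟨σ, rfl⟩
  exact (contValue_mem hlam hu σ.2.1 hg h₀).2

end BoundedMemory
end
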